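/- There exists ε₀ > 0 such that for every 0 < ε ≤ ε₀ and all θ₁, θ₂ ∈ ℝ, the sets X_{θ₁} ∩ B̄(0,ε) and X_{θ₂} ∩ B̄(0,ε) are homeomorphic; that is, all members of the canonical pencil of f are homeomorphic to one another inside a sufficiently small closed ball around the origin. -/

import Mathlib

/-- The member `X_θ` of the canonical pencil of `f`. -/
def Xset {α : Type} (U : Set α) (f : α → ℂ) (θ : ℝ) : Set α :=
  {x ∈ U | ∃ t : ℝ, f x = t * Complex.exp (θ * Complex.I)}

/-!
On a small ball, outside the zeros of `f`, there is a vector field tangent to the spheres around the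
origin along which `arg f` increases at unit speed and `log ‖f‖` changes at bounded speed: the
normalised tangential part of the gradient of `arg f`. It exists since this gradient is not nearly
radial. The field tends to `0` at the zeros of `f`, since `f` is small compared to its derivative
there. Hence its flow at time `θ₂ - θ₁` extends by the identity on the zeros of `f` to a
homeomorphism from `X_θ₁` to `X_θ₂` preserving the norm.

If one of these two estimates failed, then it would fail along a holomorphic arc by curve selection,
where comparing orders of vanishing yields a contradiction. Curve selection is an induction on the
dimension: Weierstrass preparation presents a hypersurface as a branched cover, whose restriction to
an arc in the base is parametrized by Newton–Puiseux. Roots are handled as holomorphic multisets.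
-/

open Filter Topology Metric Set MeasureTheory Polynomial

/-! ### Holomorphic functions of several variables -/

section Holomorphic

variable {E F G : Type*} [NormedAddCommGroup E] [NormedSpace ℂ E] [NormedAddCommGroup F]
  [NormedSpace ℂ F] [NormedAddCommGroup G] [NormedSpace ℂ G]

/-- `f` is holomorphic at `x`: it is complex differentiable at all points near `x`. -/
@[fun_prop]
def HolomorphicAt (f : E → F) (x : E) : Prop :=
  ∀ᶠ y in 𝓝 x, DifferentiableAt ℂ f y

namespace HolomorphicAt

lemma differentiableAt {f : E → F} {x : E} (hf : HolomorphicAt f x) : DifferentiableAt ℂ f x :=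
  hf.self_of_nhds

lemma continuousAt {f : E → F} {x : E} (hf : HolomorphicAt f x) : ContinuousAt f x :=
  hf.differentiableAt.continuousAt

lemma eventually {f : E → F} {x : E} (hf : HolomorphicAt f x) :
    ∀ᶠ y in 𝓝 x, HolomorphicAt f y :=
  eventually_eventually_nhds.2 hf

lemma congr {f g : E → F} {x : E} (hf : HolomorphicAt f x) (hfg : f =ᶠ[𝓝 x] g) :
    HolomorphicAt g x := by
  filter_upwards [hf, hfg.eventuallyEq_nhds] with y hy hfg_y
  exact hy.congr_of_eventuallyEq hfg_y.symm

lemma of_differentiable {f : E → F} (hf : Differentiable ℂ f) (x : E) : HolomorphicAt f x :=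
  .of_forall hf

@[fun_prop]
lemma id (x : E) : HolomorphicAt (fun y : E => y) x :=
  of_differentiable differentiable_id x

@[fun_prop]
lemma const (c : F) (x : E) : HolomorphicAt (fun _ : E => c) x :=
  of_differentiable (differentiable_const c) x

@[fun_prop]
lemma comp {g : F → G} {f : E → F} {x : E} (hg : HolomorphicAt g (f x))
    (hf : HolomorphicAt f x) : HolomorphicAt (fun y => g (f y)) x := by
  filter_upwards [hf, hf.continuousAt.eventually hg] with y hfy hgy
  exact DifferentiableAt.comp y hgy hfy

@[fun_prop]
lemma prodMk {f : E → F} {g : E → G} {x : E} (hf : HolomorphicAt f x) (hg : HolomorphicAt g x) :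
    HolomorphicAt (fun y => (f y, g y)) x := by
  filter_upwards [hf, hg] with y hfy hgy using hfy.prodMk hgy

@[fun_prop]
lemma fst {f : E → F × G} {x : E} (hf : HolomorphicAt f x) :
    HolomorphicAt (fun y => (f y).1) x := by
  filter_upwards [hf] with y hfy using hfy.fst

@[fun_prop]
lemma snd {f : E → F × G} {x : E} (hf : HolomorphicAt f x) :
    HolomorphicAt (fun y => (f y).2) x := by
  filter_upwards [hf] with y hfy using hfy.snd

@[fun_prop]
lemma add {f g : E → F} {x : E} (hf : HolomorphicAt f x) (hg : HolomorphicAt g x) :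
    HolomorphicAt (fun y => f y + g y) x := by
  filter_upwards [hf, hg] with y hfy hgy using hfy.add hgy

@[fun_prop]
lemma sub {f g : E → F} {x : E} (hf : HolomorphicAt f x) (hg : HolomorphicAt g x) :
    HolomorphicAt (fun y => f y - g y) x := by
  filter_upwards [hf, hg] with y hfy hgy using hfy.sub hgy

@[fun_prop]
lemma sum {ι : Type*} {s : Finset ι} {f : ι → E → F} {x : E}
    (hf : ∀ i ∈ s, HolomorphicAt (f i) x) : HolomorphicAt (fun y => ∑ i ∈ s, f i y) x := by
  filter_upwards [(eventually_all_finset s).2 hf] with y hfy using DifferentiableAt.fun_sum hfy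

@[fun_prop]
lemma smul {c : E → ℂ} {f : E → F} {x : E} (hc : HolomorphicAt c x) (hf : HolomorphicAt f x) :
    HolomorphicAt (fun y => c y • f y) x := by
  filter_upwards [hc, hf] with y hcy hfy using hcy.smul hfy

@[fun_prop]
lemma mul {f g : E → ℂ} {x : E} (hf : HolomorphicAt f x) (hg : HolomorphicAt g x) :
    HolomorphicAt (fun y => f y * g y) x :=
  hf.smul hg

@[fun_prop]
lemma pow {f : E → ℂ} {x : E} (hf : HolomorphicAt f x) (k : ℕ) :
    HolomorphicAt (fun y => f y ^ k) x := by
  filter_upwards [hf] with y hfy using hfy.pow k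

@[fun_prop]
lemma inv {f : E → ℂ} {x : E} (hf : HolomorphicAt f x) (hx : f x ≠ 0) :
    HolomorphicAt (fun y => (f y)⁻¹) x := by
  filter_upwards [hf, hf.continuousAt.eventually_ne hx] with y hfy hy using hfy.inv hy

@[fun_prop]
lemma div {f g : E → ℂ} {x : E} (hf : HolomorphicAt f x) (hg : HolomorphicAt g x)
    (hx : g x ≠ 0) : HolomorphicAt (fun y => f y / g y) x := by
  simpa only [div_eq_mul_inv] using hf.mul (hg.inv hx)

end HolomorphicAt

lemma holomorphicAt_iff_analyticAt [CompleteSpace F] {f : ℂ → F} {x : ℂ} :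
    HolomorphicAt f x ↔ AnalyticAt ℂ f x :=
  Complex.analyticAt_iff_eventually_differentiableAt.symm

lemma norm_partial_fderiv_le {H : E × G → F} {x₀ x : E} {s : G} {M ρ : ℝ} (hρ : 0 < ρ)
    (hH : ∀ y ∈ ball x₀ (2 * ρ), DifferentiableAt ℂ H (y, s) ∧ ‖H (y, s)‖ ≤ M)
    (hx : x ∈ ball x₀ ρ) :
    ‖(fderiv ℂ H (x, s)).comp (ContinuousLinearMap.inl ℂ E G)‖ ≤ (M + M) / ρ := by
  have hsub : ball x ρ ⊆ ball x₀ (2 * ρ) :=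
    ball_subset_ball' (by linarith [mem_ball.1 hx])
  have hpartial : ∀ y ∈ ball x ρ, HasFDerivAt (fun y => H (y, s))
      ((fderiv ℂ H (y, s)).comp (ContinuousLinearMap.inl ℂ E G)) y := fun y hy =>
    (hH y (hsub hy)).1.hasFDerivAt.comp y (hasFDerivAt_prodMk_left y s)
  rw [← (hpartial x (mem_ball_self hρ)).fderiv]
  refine Complex.norm_fderiv_le_div_of_mapsTo_ball
    (fun y hy => (hpartial y hy).differentiableAt.differentiableWithinAt) (fun y hy => ?_) hρ
  rw [mem_closedBall, dist_eq_norm]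
  exact (norm_sub_le _ _).trans
    (add_le_add (hH y (hsub hy)).2 (hH x (hsub (mem_ball_self hρ))).2)

lemma HolomorphicAt.exists_ball_bound_of_sphere {H : E × ℂ → F} {x₀ : E} {c : ℂ} {r : ℝ}
    (hH : ∀ s ∈ sphere c r, HolomorphicAt H (x₀, s)) :
    ∃ ρ > 0, ∃ M, ∀ x ∈ ball x₀ (2 * ρ), ∀ s ∈ sphere c r,
      DifferentiableAt ℂ H (x, s) ∧ ‖H (x, s)‖ ≤ M := by
  have hcont : ContinuousOn (fun s => H (x₀, s)) (sphere c r) := fun s hs =>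
    ContinuousAt.continuousWithinAt
      (ContinuousAt.comp (f := fun s => (x₀, s)) (hH s hs).continuousAt (by fun_prop))
  obtain ⟨M, hM⟩ := (isCompact_sphere c r).exists_bound_of_continuousOn hcont
  have hev : ∀ᶠ x in 𝓝 x₀, ∀ s ∈ sphere c r, DifferentiableAt ℂ H (x, s) ∧ ‖H (x, s)‖ ≤ M + 1 :=
    (isCompact_sphere c r).eventually_forall_of_forall_eventually fun s hs =>
      (hH s hs).and <| (hH s hs).continuousAt.norm.eventually_le_const
        ((hM s hs).trans_lt (lt_add_one M))
  obtain ⟨R, hR, hball⟩ := Metric.eventually_nhds_iff_ball.1 hev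
  exact ⟨R / 2, half_pos hR, M + 1, by simpa only [mul_div_cancel₀ R two_ne_zero] using hball⟩

lemma stronglyMeasurable_partial_fderiv_circleMap [FiniteDimensional ℂ E] (H : E × ℂ → ℂ) (x : E)
    (c : ℂ) (r : ℝ) : StronglyMeasurable fun t : ℝ =>
      (fderiv ℂ H (x, circleMap c r t)).comp (ContinuousLinearMap.inl ℂ E ℂ) := by
  have : ProperSpace E := FiniteDimensional.proper ℂ E
  borelize E
  have hfderiv : Measurable fun t : ℝ => fderiv ℂ H (x, circleMap c r t) :=
    (measurable_fderiv ℂ H).comp (by fun_prop)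
  have hcomp : Continuous fun L : E × ℂ →L[ℂ] ℂ => L.comp (ContinuousLinearMap.inl ℂ E ℂ) := by
    fun_prop
  exact hcomp.comp_stronglyMeasurable hfderiv.stronglyMeasurable

lemma HolomorphicAt.circleIntegral [FiniteDimensional ℂ E] {H : E × ℂ → ℂ} {x₀ : E} {c : ℂ}
    {r : ℝ} (hr : 0 ≤ r) (hH : ∀ s ∈ sphere c r, HolomorphicAt H (x₀, s)) :
    HolomorphicAt (fun x => ∮ s in C(c, r), H (x, s)) x₀ := by
  obtain ⟨ρ, hρ, M, hHM⟩ := exists_ball_bound_of_sphere hH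
  have hmem (t : ℝ) : circleMap c r t ∈ sphere c r := circleMap_mem_sphere c hr t
  have hsub : ball x₀ ρ ⊆ ball x₀ (2 * ρ) := ball_subset_ball (by linarith)
  have hdiff : ∀ x ∈ ball x₀ ρ, ∀ t : ℝ, DifferentiableAt ℂ H (x, circleMap c r t) :=
    fun x hx t => (hHM x (hsub hx) _ (hmem t)).1
  have hderiv : Continuous fun t : ℝ => deriv (circleMap c r) t := by
    simp only [deriv_circleMap]
    fun_prop
  have hcont : ∀ x ∈ ball x₀ ρ,
      Continuous fun t : ℝ => deriv (circleMap c r) t • H (x, circleMap c r t) := by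
    intro x hx
    exact hderiv.smul <| continuous_iff_continuousAt.2 fun t =>
      ContinuousAt.comp (f := fun t : ℝ => (x, circleMap c r t)) (hdiff x hx t).continuousAt
        (by fun_prop)
  filter_upwards [ball_mem_nhds x₀ hρ] with x hx
  have hball : ball x₀ ρ ∈ 𝓝 x := isOpen_ball.mem_nhds hx
  refine (intervalIntegral.hasFDerivAt_integral_of_dominated_of_fderiv_le (𝕜 := ℂ)
    (F' := fun x t => deriv (circleMap c r) t •
      (fderiv ℂ H (x, circleMap c r t)).comp (ContinuousLinearMap.inl ℂ E ℂ))
    (bound := fun _ => r * ((M + M) / ρ)) hball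
    (eventually_of_mem hball fun y hy => (hcont y hy).aestronglyMeasurable)
    ((hcont x hx).intervalIntegrable _ _)
    (hderiv.stronglyMeasurable.smul
      (stronglyMeasurable_partial_fderiv_circleMap H x c r)).aestronglyMeasurable
    (.of_forall fun t _ y hy => ?_) intervalIntegrable_const
    (.of_forall fun t _ y hy => ?_)).differentiableAt
  · rw [norm_smul, deriv_circleMap, norm_mul, norm_circleMap_zero, Complex.norm_I, mul_one,
      abs_of_nonneg hr]
    exact mul_le_mul_of_nonneg_left
      (norm_partial_fderiv_le hρ (fun z hz => hHM z hz _ (hmem t)) hy) hr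
  · exact ((hdiff y hy t).hasFDerivAt.comp y (hasFDerivAt_prodMk_left y _)).fun_const_smul _

lemma fderiv_apply_eq_circleIntegral {f : E → F} [CompleteSpace F] {x v : E} {δ : ℝ} (hδ : 0 < δ)
    (hf : ∀ s ∈ closedBall (0 : ℂ) δ, HolomorphicAt f (x + s • v)) :
    (2 * Real.pi * Complex.I : ℂ)⁻¹ • ∮ s in C(0, δ), ((s - 0) ^ 2)⁻¹ • f (x + s • v) =
      fderiv ℂ f x v := by
  have hline (s : ℂ) : HasDerivAt (fun s : ℂ => x + s • v) v s := by
    simpa using ((hasDerivAt_id s).smul_const v).const_add x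
  have hopen : IsOpen {s : ℂ | HolomorphicAt f (x + s • v)} := isOpen_iff_mem_nhds.2 fun s hs =>
    (hline s).continuousAt.eventually hs.eventually
  have hcauchy := Complex.two_pi_I_inv_smul_circleIntegral_sub_sq_inv_smul_of_differentiable
    (f := fun s => f (x + s • v)) hopen hf (fun s (hs : HolomorphicAt f (x + s • v)) =>
      (hs.differentiableAt.comp s (hline s).differentiableAt).differentiableWithinAt)
    (mem_ball_self hδ)
  have hfx : HasFDerivAt f (fderiv ℂ f x) (x + (0 : ℂ) • v) := by
    have hx := hf 0 (mem_closedBall_self hδ.le)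
    rw [zero_smul, add_zero] at hx ⊢
    exact hx.differentiableAt.hasFDerivAt
  exact hcauchy.trans (hfx.comp_hasDerivAt 0 (hline 0)).deriv

lemma HolomorphicAt.fderiv_apply [FiniteDimensional ℂ E] {f : E → ℂ} {x₀ : E}
    (hf : HolomorphicAt f x₀) (v : E) : HolomorphicAt (fun x => fderiv ℂ f x v) x₀ := by
  have hcont : ContinuousAt (fun p : E × ℂ => p.1 + p.2 • v) (x₀, 0) := by fun_prop
  have hev : ∀ᶠ p in 𝓝 (x₀, (0 : ℂ)), HolomorphicAt f (p.1 + p.2 • v) :=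
    hcont.eventually (by simpa using hf.eventually)
  obtain ⟨R, hR, hball⟩ := Metric.eventually_nhds_iff_ball.1 hev
  have hline : ∀ x ∈ ball x₀ R, ∀ s ∈ closedBall (0 : ℂ) (R / 2), HolomorphicAt f (x + s • v) :=
    fun x hx s hs => hball (x, s) <| by
      rw [← ball_prod_same]
      exact ⟨hx, closedBall_subset_ball (half_lt_self hR) hs⟩
  have hintegral : HolomorphicAt (fun x => (2 * Real.pi * Complex.I : ℂ)⁻¹ •
      ∮ s in C(0, R / 2), ((s - 0) ^ 2)⁻¹ • f (x + s • v)) x₀ := by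
    refine (const _ x₀).smul (.circleIntegral (half_pos hR).le
      (H := fun p : E × ℂ => ((p.2 - 0) ^ 2)⁻¹ • f (p.1 + p.2 • v)) fun s hs => ?_)
    have hs0 : (s - 0) ^ 2 ≠ 0 := by
      rw [sub_zero]
      exact pow_ne_zero 2 (ne_of_mem_sphere hs (half_pos hR).ne')
    have hf_line : HolomorphicAt f (x₀ + s • v) :=
      hline x₀ (mem_ball_self hR) s (sphere_subset_closedBall hs)
    fun_prop (disch := assumption)
  refine hintegral.congr ?_
  filter_upwards [ball_mem_nhds x₀ hR] with x hx
  exact fderiv_apply_eq_circleIntegral (half_pos hR) (hline x hx)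

end Holomorphic

/-! ### Multisets depending holomorphically on a parameter -/

section Newton

lemma sum_univ_multiset_coe {α M : Type*} [DecidableEq α] [AddCommMonoid M] (s : Multiset α)
    (f : α → M) : ∑ i : s, f i = (s.map f).sum :=
  congrArg Multiset.sum (Multiset.map_univ s f)

lemma multiset_sum_map_ite_zero {α M : Type*} [AddCommMonoid M] (s : Multiset α) (p : α → Prop)
    [DecidablePred p] (f : α → M) :
    (s.map fun a => if p a then f a else 0).sum = ((s.filter p).map f).sum := by
  induction s using Multiset.induction_on with
  | empty => simp
  | cons a s ih => by_cases ha : p a <;> simp [ha, ih]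

variable {R : Type*} [CommRing R]

lemma aeval_psum_eq_multiset_sum [DecidableEq R] (s : Multiset R) (k : ℕ) :
    MvPolynomial.aeval (fun i : s => (i : R)) (MvPolynomial.psum s R k) =
      (s.map (· ^ k)).sum := by
  simp only [MvPolynomial.psum, map_sum, map_pow, MvPolynomial.aeval_X]
  exact sum_univ_multiset_coe s (· ^ k)

lemma multiset_mul_esymm_eq_sum (s : Multiset R) (k : ℕ) :
    k * s.esymm k = (-1) ^ (k + 1) *
      ∑ a ∈ Finset.HasAntidiagonal.antidiagonal k with a.1 < k,
        (-1) ^ a.1 * s.esymm a.1 * (s.map (· ^ a.2)).sum := by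
  classical
  simpa only [map_mul, map_sum, map_pow, map_neg, map_one, map_natCast,
    MvPolynomial.aeval_esymm_eq_multiset_esymm, Multiset.map_univ_coe,
    aeval_psum_eq_multiset_sum] using congrArg (MvPolynomial.aeval fun i : s => (i : R))
      (MvPolynomial.mul_esymm_eq_sum s R k)

lemma multiset_psum_eq_mul_esymm_sub_sum (s : Multiset R) {k : ℕ} (hk : 0 < k) :
    (s.map (· ^ k)).sum = (-1) ^ (k + 1) * k * s.esymm k -
      ∑ a ∈ Finset.HasAntidiagonal.antidiagonal k with a.1 ∈ Ioo 0 k,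
        (-1) ^ a.1 * s.esymm a.1 * (s.map (· ^ a.2)).sum := by
  classical
  simpa only [map_mul, map_sum, map_sub, map_pow, map_neg, map_one, map_natCast,
    MvPolynomial.aeval_esymm_eq_multiset_esymm, Multiset.map_univ_coe,
    aeval_psum_eq_multiset_sum] using congrArg (MvPolynomial.aeval fun i : s => (i : R))
      (MvPolynomial.psum_eq_mul_esymm_sub_sum s R k hk)

end Newton

section RootPoly

/-- The monic polynomial with root multiset `s`. -/
noncomputable def rootPoly (s : Multiset ℂ) : ℂ[X] :=
  (s.map fun a => X - C a).prod

lemma eval_rootPoly (s : Multiset ℂ) (z : ℂ) :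
    (rootPoly s).eval z = (s.map fun a => z - a).prod := by
  simp [rootPoly, eval_multiset_prod, Multiset.map_map]

lemma eval_rootPoly_eq_zero_iff {s : Multiset ℂ} {z : ℂ} : (rootPoly s).eval z = 0 ↔ z ∈ s := by
  simp [eval_rootPoly, Multiset.prod_eq_zero_iff, sub_eq_zero]

lemma eval_rootPoly_eq_sum (s : Multiset ℂ) (z : ℂ) :
    (rootPoly s).eval z = ∑ j ∈ Finset.range (s.card + 1),
      (-1) ^ j * s.esymm j * z ^ (s.card - j) := by
  simp [rootPoly, Multiset.prod_X_sub_X_eq_sum_esymm, eval_finsetSum, mul_assoc]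

lemma logDeriv_eval_rootPoly {s : Multiset ℂ} {z : ℂ} (hz : z ∉ s) :
    logDeriv (fun z => (rootPoly s).eval z) z = (s.map fun a => 1 / (z - a)).sum := by
  have hroots : (rootPoly s).roots = s := roots_multiset_prod_X_sub_C s
  rw [logDeriv_apply, Polynomial.deriv, (IsAlgClosed.splits _).eval_derivative_div_eval_of_ne_zero
    (mt eval_rootPoly_eq_zero_iff.1 hz), hroots]

end RootPoly

section HolomorphicMultiset

variable {E F : Type*} [NormedAddCommGroup E] [NormedSpace ℂ E]
  [NormedAddCommGroup F] [NormedSpace ℂ F]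

/-- A family of finite multisets of complex numbers is holomorphic at `x₀` if all its power sums
are. By Newton's identities this says that, near `x₀`, the family consists of the roots of a monic
polynomial whose coefficients are holomorphic functions. -/
def HolomorphicMultisetAt (s : E → Multiset ℂ) (x₀ : E) : Prop :=
  ∀ k : ℕ, HolomorphicAt (fun x => ((s x).map (· ^ k)).sum) x₀

lemma eventually_eq_of_continuousAt_natCast {X : Type*} [TopologicalSpace X] {N : X → ℕ} {x₀ : X}
    (h : ContinuousAt (fun x => (N x : ℂ)) x₀) : ∀ᶠ x in 𝓝 x₀, N x = N x₀ := by
  have hN : ContinuousAt N x₀ := by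
    refine Nat.isClosedEmbedding_coe_real.isInducing.continuousAt_iff.2 ?_
    simpa [Function.comp_def] using Complex.continuous_re.continuousAt.comp h
  exact hN.eventually_mem (mem_nhds_discrete.2 (mem_singleton (N x₀)))

namespace HolomorphicMultisetAt

variable {s : E → Multiset ℂ} {x₀ : E}

lemma eventually_card_eq (hs : HolomorphicMultisetAt s x₀) :
    ∀ᶠ x in 𝓝 x₀, (s x).card = (s x₀).card :=
  eventually_eq_of_continuousAt_natCast (by simpa using (hs 0).continuousAt)

lemma comp {g : F → E} {y : F} (hs : HolomorphicMultisetAt s (g y)) (hg : HolomorphicAt g y) :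
    HolomorphicMultisetAt (fun y => s (g y)) y :=
  fun k => .comp (g := fun x => ((s x).map (· ^ k)).sum) (hs k) hg

lemma esymm (hs : HolomorphicMultisetAt s x₀) (k : ℕ) :
    HolomorphicAt (fun x => (s x).esymm k) x₀ := by
  induction k using Nat.strong_induction_on with
  | _ k ih =>
    rcases Nat.eq_zero_or_pos k with rfl | hk
    · simpa [Multiset.esymm] using HolomorphicAt.const (1 : ℂ) x₀
    have hsum : HolomorphicAt (fun x => (k : ℂ)⁻¹ * ((-1) ^ (k + 1) *
        ∑ a ∈ Finset.HasAntidiagonal.antidiagonal k with a.1 < k,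
          (-1) ^ a.1 * (s x).esymm a.1 * ((s x).map (· ^ a.2)).sum)) x₀ := by
      refine (HolomorphicAt.const _ _).mul ((HolomorphicAt.const _ _).mul (.sum fun a ha => ?_))
      exact ((HolomorphicAt.const _ _).mul (ih _ (Finset.mem_filter.1 ha).2)).mul (hs _)
    refine hsum.congr (.of_forall fun x => ?_)
    simp only
    rw [← multiset_mul_esymm_eq_sum, inv_mul_cancel_left₀ (Nat.cast_ne_zero.2 hk.ne')]

lemma of_esymm {d : ℕ} (hcard : ∀ᶠ x in 𝓝 x₀, (s x).card = d)
    (hs : ∀ k, 1 ≤ k → k ≤ d → HolomorphicAt (fun x => (s x).esymm k) x₀) :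
    HolomorphicMultisetAt s x₀ := by
  have hesymm : ∀ k, 1 ≤ k → HolomorphicAt (fun x => (s x).esymm k) x₀ := by
    intro k hk
    rcases le_or_gt k d with hkd | hkd
    · exact hs k hk hkd
    · refine (HolomorphicAt.const 0 x₀).congr ?_
      filter_upwards [hcard] with x hx
      rw [Multiset.esymm, Multiset.powersetCard_eq_empty _ (hx.trans_lt hkd), Multiset.map_zero,
        Multiset.sum_zero]
  intro k
  induction k using Nat.strong_induction_on with
  | _ k ih =>
    rcases Nat.eq_zero_or_pos k with rfl | hk
    · refine (HolomorphicAt.const (d : ℂ) x₀).congr ?_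
      filter_upwards [hcard] with x hx
      simp [hx]
    simp only [multiset_psum_eq_mul_esymm_sub_sum _ hk]
    refine ((HolomorphicAt.const _ _).mul (hesymm k hk)).sub (.sum fun a ha => ?_)
    obtain ⟨hak, ha0, -⟩ := Finset.mem_filter.1 ha
    have := Finset.HasAntidiagonal.mem_antidiagonal.1 hak
    exact ((HolomorphicAt.const _ _).mul (hesymm _ ha0)).mul (ih _ (by omega))

lemma eval_rootPoly (hs : HolomorphicMultisetAt s x₀) (z : ℂ) :
    HolomorphicAt (fun p : E × ℂ => (rootPoly (s p.1)).eval p.2) (x₀, z) := by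
  have hcoeff (j : ℕ) : HolomorphicAt (fun p : E × ℂ => (s p.1).esymm j) (x₀, z) :=
    .comp (g := fun x => (s x).esymm j) (hs.esymm j) (by fun_prop)
  have hsum : HolomorphicAt (fun p : E × ℂ => ∑ j ∈ Finset.range ((s x₀).card + 1),
      (-1) ^ j * (s p.1).esymm j * p.2 ^ ((s x₀).card - j)) (x₀, z) :=
    .sum fun j _ => ((HolomorphicAt.const _ _).mul (hcoeff j)).mul (by fun_prop)
  refine hsum.congr ?_
  filter_upwards [(continuous_fst.tendsto (x₀, z)).eventually hs.eventually_card_eq] with p hp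
  rw [eval_rootPoly_eq_sum, hp]

end HolomorphicMultisetAt

end HolomorphicMultiset

/-! ### The argument principle with parameters -/

section ArgumentPrinciple

lemma circleIntegral_eq_zero_of_differentiableAt {g : ℂ → ℂ} {c : ℂ} {r : ℝ} (hr : 0 ≤ r)
    (hg : ∀ z ∈ closedBall c r, DifferentiableAt ℂ g z) : ∮ z in C(c, r), g z = 0 :=
  Complex.circleIntegral_eq_zero_of_differentiable_on_off_countable hr countable_empty
    (fun z hz => (hg z hz).continuousAt.continuousWithinAt)
    fun z hz => hg z (ball_subset_closedBall hz.1)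

open scoped Classical in
lemma circleIntegral_mul_one_div_sub {g : ℂ → ℂ} {c a : ℂ} {r : ℝ} (hr : 0 ≤ r)
    (hg : ∀ z ∈ closedBall c r, DifferentiableAt ℂ g z) (ha : a ∉ sphere c r) :
    ∮ z in C(c, r), g z * (1 / (z - a)) =
      if a ∈ ball c r then 2 * Real.pi * Complex.I * g a else 0 := by
  split_ifs with hab
  · simpa [mul_comm] using
      Complex.circleIntegral_sub_inv_smul_of_differentiable_on_off_countable countable_empty hab
        (fun z hz => (hg z hz).continuousAt.continuousWithinAt)
        fun z hz => hg z (ball_subset_closedBall hz.1)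
  · have ha' : a ∉ closedBall c r := fun h => by
      rw [← ball_union_sphere] at h
      exact h.elim hab ha
    exact circleIntegral_eq_zero_of_differentiableAt hr fun z hz =>
      (hg z hz).mul <| (differentiableAt_const _).div (by fun_prop)
        (sub_ne_zero.2 (ne_of_mem_of_not_mem hz ha'))

open scoped Classical in
lemma circleIntegral_mul_sum_one_div_sub {g : ℂ → ℂ} {c : ℂ} {r : ℝ} (hr : 0 ≤ r)
    (hg : ∀ z ∈ closedBall c r, DifferentiableAt ℂ g z) (s : Multiset ℂ)
    (hs : ∀ a ∈ s, a ∉ sphere c r) :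
    ∮ z in C(c, r), g z * (s.map fun a => 1 / (z - a)).sum =
      2 * Real.pi * Complex.I * ((s.filter (· ∈ ball c r)).map g).sum := by
  have hterm : ∀ a ∈ s, CircleIntegrable (fun z => g z * (1 / (z - a))) c r := by
    intro a ha
    refine ContinuousOn.circleIntegrable hr fun z hz => ContinuousAt.continuousWithinAt ?_
    exact (hg z (sphere_subset_closedBall hz)).continuousAt.mul <|
      continuousAt_const.div (by fun_prop) (sub_ne_zero.2 (ne_of_mem_of_not_mem hz (hs a ha)))
  have hsum (z : ℂ) : g z * (s.map fun a => 1 / (z - a)).sum =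
      ∑ a : s, g z * (1 / (z - a)) := by
    rw [← Finset.mul_sum, sum_univ_multiset_coe s fun a => 1 / (z - a)]
  simp only [hsum]
  rw [circleIntegral.integral_fun_sum fun a _ => hterm _ Multiset.coe_mem,
    Finset.sum_congr rfl fun a _ => circleIntegral_mul_one_div_sub hr hg (hs _ Multiset.coe_mem),
    sum_univ_multiset_coe s fun a => if a ∈ ball c r then 2 * Real.pi * Complex.I * g a else 0,
    multiset_sum_map_ite_zero, Multiset.sum_map_mul_left]

section Parameter

variable {E : Type*} [NormedAddCommGroup E] [NormedSpace ℂ E] [FiniteDimensional ℂ E]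
  {x₀ : E} {c : ℂ} {r : ℝ}

lemma HolomorphicAt.circleIntegral_mul_logDeriv {F G : E × ℂ → ℂ} (hr : 0 ≤ r)
    (hG : ∀ z ∈ sphere c r, HolomorphicAt G (x₀, z))
    (hF : ∀ z ∈ sphere c r, HolomorphicAt F (x₀, z)) (hF0 : ∀ z ∈ sphere c r, F (x₀, z) ≠ 0) :
    HolomorphicAt (fun x => ∮ z in C(c, r), G (x, z) * logDeriv (fun z => F (x, z)) z) x₀ := by
  have hderiv {p : E × ℂ} (hp : HolomorphicAt F p) :
      deriv (fun z => F (p.1, z)) p.2 = fderiv ℂ F p (0, 1) :=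
    (hp.differentiableAt.hasFDerivAt.comp_hasDerivAt p.2
      ((hasDerivAt_const p.2 p.1).prodMk (hasDerivAt_id p.2))).deriv
  refine HolomorphicAt.circleIntegral
    (H := fun p => G p * logDeriv (fun z => F (p.1, z)) p.2) hr fun z hz => (hG z hz).mul ?_
  refine (((hF z hz).fderiv_apply (0, 1)).div (hF z hz) (hF0 z hz)).congr ?_
  filter_upwards [(hF z hz).eventually] with p hp
  rw [logDeriv_apply, hderiv hp]

open scoped Classical in
lemma HolomorphicMultisetAt.sum_filter_ball {s : E → Multiset ℂ}
    (hs : HolomorphicMultisetAt s x₀) (hr : 0 ≤ r) (hs0 : ∀ a ∈ s x₀, a ∉ sphere c r)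
    {G : E × ℂ → ℂ} (hG : ∀ z ∈ closedBall c r, HolomorphicAt G (x₀, z)) :
    HolomorphicAt (fun x => (((s x).filter (· ∈ ball c r)).map fun a => G (x, a)).sum) x₀ := by
  have hne : ∀ z ∈ sphere c r, (rootPoly (s x₀)).eval z ≠ 0 := fun z hz =>
    mt eval_rootPoly_eq_zero_iff.1 fun hm => hs0 z hm hz
  have hintegral := HolomorphicAt.circleIntegral_mul_logDeriv
    (F := fun p : E × ℂ => (rootPoly (s p.1)).eval p.2) hr
    (fun z hz => hG z (sphere_subset_closedBall hz)) (fun z _ => hs.eval_rootPoly z) hne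
  have hev : ∀ᶠ x in 𝓝 x₀, ∀ z ∈ sphere c r, (rootPoly (s x)).eval z ≠ 0 :=
    (isCompact_sphere c r).eventually_forall_of_forall_eventually fun z hz =>
      (hs.eval_rootPoly z).continuousAt.eventually_ne (hne z hz)
  have hGev : ∀ᶠ x in 𝓝 x₀, ∀ z ∈ closedBall c r, DifferentiableAt ℂ G (x, z) :=
    (isCompact_closedBall c r).eventually_forall_of_forall_eventually hG
  refine ((HolomorphicAt.const (2 * Real.pi * Complex.I : ℂ)⁻¹ x₀).mul hintegral).congr ?_
  filter_upwards [hev, hGev] with x hx hGx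
  have hsx : ∀ z ∈ sphere c r, z ∉ s x := fun z hz => mt eval_rootPoly_eq_zero_iff.2 (hx z hz)
  rw [circleIntegral.integral_congr hr
    fun z hz => congrArg (G (x, z) * ·) (logDeriv_eval_rootPoly (hsx z hz)),
    circleIntegral_mul_sum_one_div_sub hr (g := fun z => G (x, z))
      (fun z hz => (hGx z hz).comp z (by fun_prop)) (s x) fun a ha hz => hsx a hz ha,
    inv_mul_cancel_left₀ Complex.two_pi_I_ne_zero]

open scoped Classical in
lemma HolomorphicMultisetAt.filter_ball {s : E → Multiset ℂ} (hs : HolomorphicMultisetAt s x₀)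
    (hr : 0 ≤ r) (hs0 : ∀ a ∈ s x₀, a ∉ sphere c r) :
    HolomorphicMultisetAt (fun x => (s x).filter (· ∈ ball c r)) x₀ := fun k =>
  hs.sum_filter_ball hr hs0 (G := fun p => p.2 ^ k) fun z _ => by fun_prop

end Parameter

end ArgumentPrinciple

section ZeroFactorization

variable {K : Set ℂ} {w : ℂ → ℂ}

lemma exists_eq_sub_pow_mul (hw : AnalyticOnNhd ℂ w K) {a : ℂ} (ha : a ∈ K)
    (hwa : ¬ ∀ᶠ z in 𝓝 a, w z = 0) :
    ∃ (m : ℕ) (g : ℂ → ℂ), AnalyticOnNhd ℂ g K ∧ g a ≠ 0 ∧ ∀ z, w z = (z - a) ^ m * g z := by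
  obtain ⟨m, g₁, hg₁, hg₁a, hev⟩ := (hw a ha).exists_eventuallyEq_pow_smul_nonzero_iff.2 hwa
  set g : ℂ → ℂ := Function.update (fun z => w z / (z - a) ^ m) a (g₁ a) with hg
  have hga : g a = g₁ a := Function.update_self ..
  have hgz {z : ℂ} (hz : z ≠ a) : g z = w z / (z - a) ^ m := Function.update_of_ne hz ..
  have hpow {z : ℂ} (hz : z ≠ a) : (z - a) ^ m ≠ 0 := pow_ne_zero m (sub_ne_zero.2 hz)
  refine ⟨m, g, fun z hz => ?_, by rwa [hga], fun z => ?_⟩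
  · rcases eq_or_ne z a with rfl | hza
    · refine hg₁.congr ?_
      filter_upwards [hev] with y hy
      rcases eq_or_ne y z with rfl | hyz
      · exact hga.symm
      · rw [hgz hyz, hy, smul_eq_mul, mul_div_cancel_left₀ _ (hpow hyz)]
    · refine ((hw z hz).div ((analyticAt_id.sub analyticAt_const).pow m) (hpow hza)).congr ?_
      filter_upwards [isOpen_ne.mem_nhds hza] with y hy using (hgz hy).symm
  · rcases eq_or_ne z a with rfl | hza
    · rw [hga, hev.self_of_nhds, smul_eq_mul]
    · rw [hgz hza, mul_div_cancel₀ _ (hpow hza)]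

lemma exists_eq_rootPoly_mul (T : Finset ℂ) (hw : AnalyticOnNhd ℂ w K)
    (hw0 : ∀ a ∈ K, ¬ ∀ᶠ z in 𝓝 a, w z = 0) (hT : ∀ z ∈ K, w z = 0 → z ∈ T) :
    ∃ (s : Multiset ℂ) (g : ℂ → ℂ), AnalyticOnNhd ℂ g K ∧ (∀ z ∈ K, g z ≠ 0) ∧
      (∀ a ∈ s, a ∈ K) ∧ ∀ z, w z = (rootPoly s).eval z * g z := by
  induction T using Finset.induction_on generalizing w with
  | empty =>
    exact ⟨0, w, hw, fun z hz h => Finset.notMem_empty z (hT z hz h), by simp,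
      by simp [eval_rootPoly]⟩
  | insert a T _ ih =>
    by_cases ha : a ∈ K
    · obtain ⟨m, g₁, hg₁, hg₁a, hwg₁⟩ := exists_eq_sub_pow_mul hw ha (hw0 a ha)
      have hzero {z : ℂ} (hz : g₁ z = 0) : w z = 0 := by rw [hwg₁, hz, mul_zero]
      obtain ⟨s, g, hg, hg0, hsK, hg₁s⟩ := ih hg₁
        (fun b hb h => hw0 b hb (h.mono fun z hz => hzero hz))
        (fun z hz h => (Finset.mem_insert.1 (hT z hz (hzero h))).resolve_left
          (by rintro rfl; exact hg₁a h))
      refine ⟨Multiset.replicate m a + s, g, hg, hg0, fun b hb => ?_, fun z => ?_⟩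
      · rcases Multiset.mem_add.1 hb with hb | hb
        · rwa [Multiset.eq_of_mem_replicate hb]
        · exact hsK b hb
      · rw [hwg₁, hg₁s]
        simp [eval_rootPoly, mul_assoc]
    · exact ih hw hw0 fun z hz h =>
        (Finset.mem_insert.1 (hT z hz h)).resolve_left (by rintro rfl; exact ha hz)

lemma finite_zeros_of_isCompact (hK : IsCompact K) (hw : AnalyticOnNhd ℂ w K)
    (hw0 : ∀ a ∈ K, ¬ ∀ᶠ z in 𝓝 a, w z = 0) : {z ∈ K | w z = 0}.Finite := by
  by_contra hinf
  obtain ⟨a, ha, hacc⟩ :=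
    Set.Infinite.exists_accPt_of_subset_isCompact hinf hK fun z hz => hz.1
  exact hw0 a ha <| (hw a ha).frequently_zero_iff_eventually_zero.1 <|
    (accPt_iff_frequently_nhdsNE.1 hacc).mono fun z hz => hz.2

open scoped Classical in
lemma circleIntegral_mul_logDeriv_rootPoly_mul {c : ℂ} {r : ℝ} (hr : 0 ≤ r) {s : Multiset ℂ}
    (hs : ∀ a ∈ s, a ∉ sphere c r) {g h : ℂ → ℂ} (hg : AnalyticOnNhd ℂ g (closedBall c r))
    (hg0 : ∀ z ∈ closedBall c r, g z ≠ 0) (hh : ∀ z ∈ closedBall c r, DifferentiableAt ℂ h z) :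
    ∮ z in C(c, r), h z * logDeriv (fun z => (rootPoly s).eval z * g z) z =
      2 * Real.pi * Complex.I * ((s.filter (· ∈ ball c r)).map h).sum := by
  have hlog : ∀ z ∈ closedBall c r, DifferentiableAt ℂ (fun z => h z * logDeriv g z) z :=
    fun z hz => (hh z hz).mul ((hg z hz).deriv.div (hg z hz) (hg0 z hz)).differentiableAt
  have hlog_cont : ContinuousOn (fun z => h z * logDeriv g z) (sphere c r) := fun z hz =>
    (hlog z (sphere_subset_closedBall hz)).continuousAt.continuousWithinAt
  have hsum_cont : ContinuousOn (fun z => h z * (s.map fun a => 1 / (z - a)).sum)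
      (sphere c r) :=
    ContinuousOn.mul (fun z hz =>
        (hh z (sphere_subset_closedBall hz)).continuousAt.continuousWithinAt) <|
      continuousOn_multiset_sum s fun a ha => continuousOn_const.div (by fun_prop)
        fun z hz => sub_ne_zero.2 (ne_of_mem_of_not_mem hz (hs a ha))
  have hsplit : EqOn (fun z => h z * logDeriv (fun z => (rootPoly s).eval z * g z) z)
      (fun z => h z * (s.map fun a => 1 / (z - a)).sum + h z * logDeriv g z) (sphere c r) := by
    intro z hz
    have hzs : z ∉ s := fun hzs => hs z hzs hz
    have hz' := sphere_subset_closedBall hz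
    simp only
    rw [logDeriv_mul z (mt eval_rootPoly_eq_zero_iff.1 hzs) (hg0 z hz')
      (rootPoly s).differentiableAt (hg z hz').differentiableAt, logDeriv_eval_rootPoly hzs,
      mul_add]
  rw [circleIntegral.integral_congr hr hsplit, circleIntegral.integral_add
    (hsum_cont.circleIntegrable hr) (hlog_cont.circleIntegrable hr),
    circleIntegral_mul_sum_one_div_sub hr hh s hs,
    circleIntegral_eq_zero_of_differentiableAt hr hlog, add_zero]

lemma exists_multiset_zeros {c : ℂ} {r : ℝ} (hr : 0 ≤ r)
    (hw : AnalyticOnNhd ℂ w (closedBall c r)) (hw0 : ∀ z ∈ sphere c r, w z ≠ 0) :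
    ∃ s : Multiset ℂ, (∀ z, z ∈ s ↔ z ∈ ball c r ∧ w z = 0) ∧
      ∀ h : ℂ → ℂ, (∀ z ∈ closedBall c r, DifferentiableAt ℂ h z) →
        ∮ z in C(c, r), h z * logDeriv w z = 2 * Real.pi * Complex.I * (s.map h).sum := by
  have hnz : ∀ a ∈ closedBall c r, ¬ ∀ᶠ z in 𝓝 a, w z = 0 := by
    intro a ha hev
    obtain ⟨b, hb⟩ := (NormedSpace.sphere_nonempty (x := c)).2 hr
    exact hw0 b hb (hw.eqOn_zero_of_preconnected_of_eventuallyEq_zero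
      (convex_closedBall c r).isPreconnected ha hev (sphere_subset_closedBall hb))
  obtain ⟨s, g, hg, hg0, hsK, hwsg⟩ := exists_eq_rootPoly_mul
    (finite_zeros_of_isCompact (isCompact_closedBall c r) hw hnz).toFinset hw hnz
    fun z hz h => (Finite.mem_toFinset _).2 ⟨hz, h⟩
  have hzero : ∀ z ∈ closedBall c r, (w z = 0 ↔ z ∈ s) := fun z hz => by
    rw [hwsg, mul_eq_zero_iff_right (hg0 z hz), eval_rootPoly_eq_zero_iff]
  have hsphere : ∀ a ∈ s, a ∉ sphere c r := fun a ha h => hw0 a h ((hzero a (hsK a ha)).2 ha)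
  have hball : ∀ a ∈ s, a ∈ ball c r := fun a ha =>
    ((ball_union_sphere (x := c)).ge (hsK a ha)).resolve_right (hsphere a ha)
  refine ⟨s, fun z => ⟨fun hz => ⟨hball z hz, (hzero z (hsK z hz)).2 hz⟩,
    fun hz => (hzero z (ball_subset_closedBall hz.1)).1 hz.2⟩, fun h hh => ?_⟩
  classical
  rw [funext hwsg, circleIntegral_mul_logDeriv_rootPoly_mul hr hsphere hg hg0 hh,
    Multiset.filter_eq_self.2 hball]

end ZeroFactorization

section ZeroFamily

variable {E : Type*} [NormedAddCommGroup E] [NormedSpace ℂ E] [FiniteDimensional ℂ E]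

lemma exists_holomorphicMultisetAt_zeros {F : E × ℂ → ℂ} {x₀ : E} {c : ℂ} {r : ℝ} (hr : 0 ≤ r)
    (hF : ∀ z ∈ closedBall c r, HolomorphicAt F (x₀, z)) (hF0 : ∀ z ∈ sphere c r, F (x₀, z) ≠ 0) :
    ∃ θ : E → Multiset ℂ, HolomorphicMultisetAt θ x₀ ∧
      ∀ᶠ x in 𝓝 x₀, ∀ z, z ∈ θ x ↔ z ∈ ball c r ∧ F (x, z) = 0 := by
  have hev : ∀ᶠ x in 𝓝 x₀, ∀ z ∈ closedBall c r, HolomorphicAt F (x, z) :=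
    (isCompact_closedBall c r).eventually_forall_of_forall_eventually fun z hz =>
      (hF z hz).eventually
  have hev0 : ∀ᶠ x in 𝓝 x₀, ∀ z ∈ sphere c r, F (x, z) ≠ 0 :=
    (isCompact_sphere c r).eventually_forall_of_forall_eventually fun z hz =>
      (hF z (sphere_subset_closedBall hz)).continuousAt.eventually_ne (hF0 z hz)
  have hzeros := hev.and hev0 |>.mono fun x ⟨hx, hx0⟩ =>
    exists_multiset_zeros (w := fun z => F (x, z)) hr (fun z hz => by
      have hFz : HolomorphicAt F (x, z) := hx z hz
      rw [← holomorphicAt_iff_analyticAt]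
      fun_prop) hx0
  obtain ⟨θ, hθ⟩ := hzeros.choice
  refine ⟨θ, fun k => ?_, hθ.mono fun x hx => hx.1⟩
  have hintegral := HolomorphicAt.circleIntegral_mul_logDeriv (G := fun p : E × ℂ => p.2 ^ k) hr
    (fun z _ => by fun_prop) (fun z hz => hF z (sphere_subset_closedBall hz)) hF0
  refine ((HolomorphicAt.const (2 * Real.pi * Complex.I : ℂ)⁻¹ x₀).mul hintegral).congr ?_
  filter_upwards [hθ] with x hx
  rw [hx.2 (· ^ k) fun z _ => by fun_prop, inv_mul_cancel_left₀ Complex.two_pi_I_ne_zero]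

-- Weierstrass preparation, with the root multiset `θ` in place of the Weierstrass polynomial.
lemma exists_holomorphicMultisetAt_small_zeros {F : E × ℂ → ℂ} (hF : HolomorphicAt F 0)
    (hF0 : ∀ᶠ z in 𝓝[≠] 0, F (0, z) ≠ 0) :
    ∃ θ : E → Multiset ℂ, HolomorphicMultisetAt θ 0 ∧
      (∀ r > 0, ∀ᶠ x in 𝓝 0, ∀ a ∈ θ x, ‖a‖ < r) ∧
      ∃ r > 0, ∀ᶠ x in 𝓝 0, ∀ z, ‖z‖ < r → F (x, z) = 0 → z ∈ θ x := by
  have hline : ∀ᶠ z in 𝓝 (0 : ℂ), HolomorphicAt F ((0 : E), z) :=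
    (Continuous.prodMk_right (0 : E)).continuousAt.eventually hF.eventually
  obtain ⟨r, hr, hball⟩ := nhds_basis_closedBall.eventually_iff.1
    (hline.and (eventually_nhdsWithin_iff.1 hF0))
  obtain ⟨θ, hθ, hθF⟩ := exists_holomorphicMultisetAt_zeros hr.le (fun z hz => (hball hz).1)
    fun z hz => (hball (sphere_subset_closedBall hz)).2 (ne_of_mem_sphere hz hr.ne')
  refine ⟨θ, hθ, fun ρ hρ => ?_, r, hr, ?_⟩
  · have hannulus : ∀ᶠ x in 𝓝 (0 : E), ∀ z ∈ closedBall (0 : ℂ) r \ ball 0 ρ, F (x, z) ≠ 0 :=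
      ((isCompact_closedBall 0 r).diff isOpen_ball).eventually_forall_of_forall_eventually
        fun z hz => (hball hz.1).1.continuousAt.eventually_ne <|
          (hball hz.1).2 fun h => hz.2 (h ▸ mem_ball_self hρ)
    filter_upwards [hθF, hannulus] with x hx hxρ a ha
    obtain ⟨har, haF⟩ := (hx a).1 ha
    by_contra h
    exact hxρ a ⟨ball_subset_closedBall har, mt mem_ball_zero_iff.1 h⟩ haF
  · filter_upwards [hθF] with x hx z hz hFz using (hx z).2 ⟨mem_ball_zero_iff.2 hz, hFz⟩

lemma HolomorphicMultisetAt.map_of_eventually_norm_lt {θ : E → Multiset ℂ}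
    (hθ : HolomorphicMultisetAt θ 0) (hsmall : ∀ r > 0, ∀ᶠ x in 𝓝 0, ∀ a ∈ θ x, ‖a‖ < r)
    {G : E × ℂ → ℂ} (hG : HolomorphicAt G 0) :
    HolomorphicMultisetAt (fun x => (θ x).map fun a => G (x, a)) 0 := by
  classical
  have hline : ∀ᶠ z in 𝓝 (0 : ℂ), HolomorphicAt G ((0 : E), z) :=
    (Continuous.prodMk_right (0 : E)).continuousAt.eventually hG.eventually
  obtain ⟨r, hr, hball⟩ := nhds_basis_closedBall.eventually_iff.1 hline
  intro k
  refine (hθ.sum_filter_ball hr.le (c := 0) (fun a ha has => ?_) (G := fun p => G p ^ k)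
    fun z hz => (hball hz).pow k).congr ?_
  · exact ((hsmall r hr).self_of_nhds a ha).ne (mem_sphere_zero_iff_norm.1 has)
  · filter_upwards [hsmall r hr] with x hx
    rw [Multiset.filter_eq_self.2 fun a ha => mem_ball_zero_iff.2 (hx a ha), Multiset.map_map]
    rfl

end ZeroFamily

/-! ### Puiseux's theorem -/

section EsymmMultiset

lemma multiset_eq_of_esymm_eq {R : Type*} [CommRing R] [IsDomain R] {s t : Multiset R}
    (hcard : s.card = t.card) (h : ∀ i ∈ Finset.Icc 1 t.card, s.esymm i = t.esymm i) : s = t := by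
  rw [← roots_multiset_prod_X_sub_C s, ← roots_multiset_prod_X_sub_C t,
    Multiset.prod_X_sub_X_eq_sum_esymm, Multiset.prod_X_sub_X_eq_sum_esymm, hcard]
  congr 1
  refine Finset.sum_congr rfl fun j hj => ?_
  rcases Nat.eq_zero_or_pos j with rfl | hj0
  · simp [Multiset.esymm]
  · rw [h j (Finset.mem_Icc.2 ⟨hj0, Finset.mem_range_succ_iff.1 hj⟩)]

lemma exists_multiset_esymm_eq {K : Type*} [Field K] [IsAlgClosed K] (d : ℕ) (c : ℕ → K) :
    ∃ s : Multiset K, s.card = d ∧ ∀ i ∈ Finset.Icc 1 d, s.esymm i = c i := by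
  set p : K[X] := X ^ d + ∑ j ∈ Finset.range d, C ((-1) ^ (d - j) * c (d - j)) * X ^ j with hp
  have hdeg : (∑ j ∈ Finset.range d, C ((-1) ^ (d - j) * c (d - j)) * X ^ j : K[X]).degree
      < (d : WithBot ℕ) := by
    rw [← mem_degreeLT]
    exact Submodule.sum_mem _ fun j hj => mem_degreeLT.2 <|
      (degree_C_mul_X_pow_le _ _).trans_lt (mod_cast Finset.mem_range.1 hj)
  have hmonic : p.Monic := monic_X_pow_add hdeg
  have hnat : p.natDegree = d := natDegree_eq_of_degree_eq_some (by
    rw [hp, degree_add_eq_left_of_degree_lt (by rwa [degree_X_pow]), degree_X_pow])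
  have hcard : p.roots.card = p.natDegree := (IsAlgClosed.splits p).natDegree_eq_card_roots.symm
  refine ⟨p.roots, hcard.trans hnat, fun i hi => ?_⟩
  obtain ⟨hi1, hid⟩ := Finset.mem_Icc.1 hi
  have hvieta := coeff_eq_esymm_roots_of_card hcard (k := d - i) (by lia)
  have hcoeff : p.coeff (d - i) = (-1) ^ i * c i := by
    simp only [hp, coeff_add, coeff_X_pow, finsetSum_coeff, coeff_C_mul]
    rw [if_neg (by lia), Finset.sum_eq_single_of_mem (d - i) (Finset.mem_range.2 (by lia))
      (by grind)]
    simp [Nat.sub_sub_self hid]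
  rw [hmonic.leadingCoeff, hnat, one_mul, Nat.sub_sub_self hid, hcoeff] at hvieta
  exact (mul_left_cancel₀ (pow_ne_zero i (neg_ne_zero.2 one_ne_zero)) hvieta).symm

variable {R : Type*} [CommRing R]

lemma multiset_esymm_one (s : Multiset R) : s.esymm 1 = s.sum := by
  simp [Multiset.esymm, Multiset.powersetCard_one, Multiset.map_map]

lemma multiset_esymm_replicate_zero (d : ℕ) {i : ℕ} (hi : i ≠ 0) :
    (Multiset.replicate d (0 : R)).esymm i = 0 := by
  have h := Multiset.pow_smul_esymm (0 : R) i (Multiset.replicate d (0 : R))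
  rw [zero_pow hi, zero_smul] at h
  simpa using h.symm

lemma multiset_exists_ne_of_esymm [IsDomain R] [CharZero R] {s : Multiset R} {b : ℕ} (hb : b ≠ 0)
    (h1 : s.esymm 1 = 0) (hsb : s.esymm b ≠ 0) : ∃ a ∈ s, ∃ a' ∈ s, a ≠ a' := by
  by_contra! hall
  refine hsb ?_
  suffices hzero : s = Multiset.replicate s.card 0 by
    rw [hzero, multiset_esymm_replicate_zero _ hb]
  rcases s.empty_or_exists_mem with rfl | ⟨a, ha⟩
  · simp
  have hrep : s = Multiset.replicate s.card a :=
    Multiset.eq_replicate.2 ⟨rfl, fun a' ha' => (hall a ha a' ha').symm⟩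
  rw [multiset_esymm_one, hrep, Multiset.sum_replicate, nsmul_eq_mul, mul_eq_zero] at h1
  have hcard : (s.card : R) ≠ 0 := mod_cast (Multiset.card_pos_iff_exists_mem.2 ⟨a, ha⟩).ne'
  rwa [h1.resolve_left hcard] at hrep

end EsymmMultiset

lemma HolomorphicMultisetAt.map_sub {E : Type*} [NormedAddCommGroup E] [NormedSpace ℂ E]
    {s : E → Multiset ℂ} {x₀ : E} (hs : HolomorphicMultisetAt s x₀) {m : E → ℂ}
    (hm : HolomorphicAt m x₀) : HolomorphicMultisetAt (fun x => (s x).map (· - m x)) x₀ := by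
  intro k
  have hsum : HolomorphicAt (fun x => ∑ j ∈ Finset.range (k + 1), ((s x).map (· ^ j)).sum *
      (((-1) * m x) ^ (k - j) * (k.choose j : ℂ))) x₀ :=
    .sum fun j _ => (hs j).mul (by fun_prop)
  refine hsum.congr (Eventually.of_forall fun x => ?_)
  simp only [Multiset.map_map, Function.comp_def, sub_eq_add_neg, ← neg_one_mul (m x)]
  generalize s x = t
  induction t using Multiset.induction_on with
  | empty => simp
  | cons a t ih =>
    simp only [Multiset.map_cons, Multiset.sum_cons, add_mul, Finset.sum_add_distrib, ih, add_pow]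
    simp only [mul_assoc]

lemma tendsto_pow_nhdsNE_zero {M : ℕ} (hM : M ≠ 0) :
    Tendsto (fun η : ℂ => η ^ M) (𝓝[≠] 0) (𝓝[≠] 0) := by
  refine tendsto_nhdsWithin_iff.2 ⟨?_, ?_⟩
  · simpa [hM] using ((continuous_pow M).tendsto (0 : ℂ)).mono_left nhdsWithin_le_nhds
  · filter_upwards [self_mem_nhdsWithin] with η hη using pow_ne_zero _ hη

lemma analyticAt_comp_pow_zero {f : ℂ → ℂ} (hf : AnalyticAt ℂ f 0) {M : ℕ} (hM : M ≠ 0) :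
    AnalyticAt ℂ (fun η => f (η ^ M)) 0 :=
  .comp (g := f) (f := (· ^ M)) (by rwa [zero_pow hM]) (by fun_prop)

section NewtonPolygon

-- `q / b` is the smallest slope of the Newton polygon with vertices `(i, n i)`.
lemma exists_min_slope {d : ℕ} {n : ℕ → ℕ∞} (hn : ∃ i ∈ Finset.Icc 1 d, n i ≠ ⊤) :
    ∃ b ∈ Finset.Icc 1 d, ∃ q : ℕ, n b = q ∧ ∀ i ∈ Finset.Icc 1 d, (q * i : ℕ) ≤ n i * b := by
  obtain ⟨j, hj, hnj⟩ := hn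
  obtain ⟨b, hb, hmin⟩ := (Finset.Icc 1 d).exists_min_image
    (fun i => (n i : ENNReal) / i) ⟨j, hj⟩
  have hpos : ∀ i ∈ Finset.Icc 1 d, (i : ENNReal) ≠ 0 := fun i hi =>
    Nat.cast_ne_zero.2 (by grind)
  have hslope {i : ℕ} (hi : i ∈ Finset.Icc 1 d) : n b * i ≤ n i * b := by
    have h := hmin i hi
    rw [ENNReal.div_le_iff (hpos b hb) (ENNReal.natCast_ne_top b), ENNReal.mul_comm_div,
      ← mul_div_assoc, ENNReal.le_div_iff_mul_le (.inl (hpos i hi))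
      (.inl (ENNReal.natCast_ne_top i))] at h
    exact_mod_cast h
  have hnb : n b ≠ ⊤ := by
    intro htop
    have h := hslope hj
    rw [htop, ENat.top_mul (Nat.cast_ne_zero.2 (by grind)), top_le_iff] at h
    exact WithTop.mul_ne_top hnj (ENat.natCast_ne_top b) h
  lift n b to ℕ using hnb with q hq
  exact ⟨b, hb, q, hq.symm, fun i hi => by simpa [← hq] using hslope hi⟩

lemma exists_comp_pow_eq_pow_mul {c : ℂ → ℂ} (hc : AnalyticAt ℂ c 0) {b m : ℕ} (hb : b ≠ 0)
    (hm : m ≤ analyticOrderAt c 0 * b) :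
    ∃ e : ℂ → ℂ, AnalyticAt ℂ e 0 ∧ (analyticOrderAt c 0 * b = m → e 0 ≠ 0) ∧
      ∀ᶠ η in 𝓝 0, c (η ^ b) = η ^ m * e η := by
  have hcomp := analyticAt_comp_pow_zero hc hb
  have horder : analyticOrderAt (fun η => c (η ^ b)) 0 = analyticOrderAt c 0 * b := by
    have hpow : analyticOrderAt (fun η : ℂ => η ^ b - 0 ^ b) 0 = b := by
      simpa [zero_pow hb, Pi.pow_def] using analyticOrderAt_pow (analyticAt_id (𝕜 := ℂ) (z := 0)) b
    rw [← hpow]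
    simpa [zero_pow hb, Function.comp_def] using AnalyticAt.analyticOrderAt_comp (f := c)
      (g := fun η : ℂ => η ^ b) (z₀ := 0) (by rwa [zero_pow hb]) (by fun_prop)
  rw [← horder] at hm ⊢
  by_cases heq : analyticOrderAt (fun η => c (η ^ b)) 0 = m
  · obtain ⟨e, he, he0, hce⟩ := hcomp.analyticOrderAt_eq_natCast.1 heq
    exact ⟨e, he, fun _ => he0, by simpa using hce⟩
  · obtain ⟨e, he, hce⟩ := (natCast_le_analyticOrderAt hcomp).1 hm
    exact ⟨e, he, fun h => absurd h heq, by simpa using hce⟩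

lemma exists_newton_rescaling {d : ℕ} {c : ℕ → ℂ → ℂ} (hc : ∀ i, AnalyticAt ℂ (c i) 0)
    (hne : ∃ i ∈ Finset.Icc 1 d, ∃ᶠ x in 𝓝 0, c i x ≠ 0) :
    ∃ b ∈ Finset.Icc 1 d, ∃ (q : ℕ) (e : ℕ → ℂ → ℂ), e b 0 ≠ 0 ∧
      ∀ i ∈ Finset.Icc 1 d, AnalyticAt ℂ (e i) 0 ∧
        ∀ᶠ η in 𝓝 0, c i (η ^ b) = (η ^ q) ^ i * e i η := by
  obtain ⟨b, hb, q, hq, hslope⟩ := exists_min_slope (n := fun i => analyticOrderAt (c i) 0)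
    (by simpa only [ne_eq, analyticOrderAt_eq_top, not_eventually] using hne)
  have hfactor (i : ℕ) : ∃ e : ℂ → ℂ, i ∈ Finset.Icc 1 d → AnalyticAt ℂ e 0 ∧
      (analyticOrderAt (c i) 0 * b = (q * i : ℕ) → e 0 ≠ 0) ∧
      ∀ᶠ η in 𝓝 0, c i (η ^ b) = η ^ (q * i) * e η := by
    by_cases hi : i ∈ Finset.Icc 1 d
    · exact (exists_comp_pow_eq_pow_mul (hc i) (by grind) (hslope i hi)).imp fun e he _ => he
    · exact ⟨0, fun h => absurd h hi⟩
  choose e he using hfactor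
  refine ⟨b, hb, q, e, (he b hb).2.1 (by rw [hq]; push_cast; rfl), fun i hi => ⟨(he i hi).1, ?_⟩⟩
  simpa only [pow_mul] using (he i hi).2.2

end NewtonPolygon

namespace HolomorphicMultisetAt

lemma exists_newton_puiseux_step {t : ℂ → Multiset ℂ} (ht : HolomorphicMultisetAt t 0)
    (h1 : ∀ᶠ x in 𝓝 0, (t x).esymm 1 = 0)
    (hne : ∃ i ∈ Finset.Icc 1 (t 0).card, ∃ᶠ x in 𝓝 0, (t x).esymm i ≠ 0) :
    ∃ (b q : ℕ) (u : ℂ → Multiset ℂ), b ≠ 0 ∧ HolomorphicMultisetAt u 0 ∧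
      (u 0).card = (t 0).card ∧ (∀ᶠ η in 𝓝 0, t (η ^ b) = (u η).map (η ^ q * ·)) ∧
      ∃ a ∈ u 0, ∃ a' ∈ u 0, a ≠ a' := by
  obtain ⟨b, hb, q, e, heb, he⟩ := exists_newton_rescaling
    (fun i => holomorphicAt_iff_analyticAt.1 (ht.esymm i)) hne
  have hb0 : b ≠ 0 := by grind
  have hone : 1 ∈ Finset.Icc 1 (t 0).card := by grind
  choose u hucard hu using fun η => exists_multiset_esymm_eq (t 0).card fun i => e i η
  have hpow : Tendsto (fun η : ℂ => η ^ b) (𝓝 0) (𝓝 0) := by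
    simpa [hb0] using (continuous_pow b).tendsto (0 : ℂ)
  have hu1 : (u 0).esymm 1 = 0 := by
    have hcont := (he 1 hone).1.continuousAt
    have hzero : ∀ᶠ η in 𝓝[≠] 0, e 1 η = 0 := by
      filter_upwards [nhdsWithin_le_nhds (he 1 hone).2, nhdsWithin_le_nhds (hpow.eventually h1),
        self_mem_nhdsWithin] with η hη hη1 hη0
      rw [hη1] at hη
      exact (mul_eq_zero.1 hη.symm).resolve_left (pow_ne_zero _ (pow_ne_zero _ hη0))
    rw [hu 0 1 hone]
    exact tendsto_nhds_unique (hcont.tendsto.mono_left nhdsWithin_le_nhds)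
      (tendsto_const_nhds.congr' (hzero.mono fun η hη => hη.symm))
  refine ⟨b, q, u, hb0, .of_esymm (.of_forall hucard) fun k hk hkd => ?_, hucard 0, ?_,
    multiset_exists_ne_of_esymm hb0 hu1 (by rwa [hu 0 b hb])⟩
  · have hk' := Finset.mem_Icc.2 ⟨hk, hkd⟩
    exact (holomorphicAt_iff_analyticAt.2 (he k hk').1).congr
      (.of_forall fun η => (hu η k hk').symm)
  · filter_upwards [(eventually_all_finset _).2 fun i hi => (he i hi).2,
      hpow.eventually ht.eventually_card_eq] with η hη hcard
    refine multiset_eq_of_esymm_eq (by rw [Multiset.card_map, hucard, hcard]) fun i hi => ?_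
    rw [Multiset.card_map, hucard] at hi
    rw [hη i hi, ← hu η i hi]
    simpa only [smul_eq_mul] using Multiset.pow_smul_esymm (η ^ q) i (u η)

lemma sub_of_add {E : Type*} [NormedAddCommGroup E] [NormedSpace ℂ E] {s t u : E → Multiset ℂ}
    {x₀ : E} (hu : HolomorphicMultisetAt u x₀) (hs : HolomorphicMultisetAt s x₀)
    (hadd : ∀ x, s x + t x = u x) : HolomorphicMultisetAt t x₀ := by
  intro k
  refine ((hu k).sub (hs k)).congr (.of_forall fun η => ?_)
  simp only [← hadd η, Multiset.map_add, Multiset.sum_add]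
  ring

lemma exists_add_of_ne {u : ℂ → Multiset ℂ} (hu : HolomorphicMultisetAt u 0) {a a' : ℂ}
    (ha : a ∈ u 0) (ha' : a' ∈ u 0) (hne : a ≠ a') :
    ∃ u₁ u₂ : ℂ → Multiset ℂ, HolomorphicMultisetAt u₁ 0 ∧ HolomorphicMultisetAt u₂ 0 ∧
      (∀ η, u₁ η + u₂ η = u η) ∧ (u₁ 0).card < (u 0).card ∧ (u₂ 0).card < (u 0).card := by
  classical
  obtain ⟨r, ⟨hr, hra'⟩, hsphere⟩ : ∃ r ∈ Ioo 0 (dist a' a), ∀ c ∈ u 0, c ∉ sphere a r := by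
    obtain ⟨r, hr, hnotin⟩ := (Ioo_infinite (dist_pos.2 hne.symm)).exists_notMem_finset
      ((u 0).toFinset.image (dist · a))
    exact ⟨r, hr, fun c hc hcr => hnotin
      (Finset.mem_image.2 ⟨c, Multiset.mem_toFinset.2 hc, mem_sphere.1 hcr⟩)⟩
  set u₁ : ℂ → Multiset ℂ := fun η => (u η).filter (· ∈ ball a r)
  set u₂ : ℂ → Multiset ℂ := fun η => (u η).filter (¬ · ∈ ball a r)
  have hadd (η : ℂ) : u₁ η + u₂ η = u η := Multiset.filter_add_not _ _
  have hu₁ : HolomorphicMultisetAt u₁ 0 := hu.filter_ball hr.le hsphere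
  refine ⟨u₁, u₂, hu₁, hu.sub_of_add hu₁ hadd, hadd, ?_, ?_⟩
  · exact Multiset.card_lt_card ((Multiset.filter_le _ _).lt_of_ne fun h =>
      (Multiset.filter_eq_self.1 h a' ha').not_ge hra'.le)
  · exact Multiset.card_lt_card ((Multiset.filter_le _ _).lt_of_ne fun h =>
      Multiset.filter_eq_self.1 h a ha (mem_ball_self hr))

end HolomorphicMultisetAt

/-- A one-parameter family of multisets is Puiseux-parametrizable at `0` if, after a ramified
base change `x = η ^ M` and away from `η = 0`, it is listed by functions holomorphic at `0`. -/
def PuiseuxParametrizable (s : ℂ → Multiset ℂ) : Prop :=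
  ∃ M : ℕ, M ≠ 0 ∧ ∃ L : Multiset (ℂ → ℂ), (∀ ℓ ∈ L, AnalyticAt ℂ ℓ 0) ∧
    ∀ᶠ η in 𝓝[≠] 0, s (η ^ M) = L.map fun ℓ => ℓ η

namespace PuiseuxParametrizable

variable {s t : ℂ → Multiset ℂ}

lemma replicate (d : ℕ) {m : ℂ → ℂ} (hm : AnalyticAt ℂ m 0) :
    PuiseuxParametrizable fun x => Multiset.replicate d (m x) := by
  refine ⟨1, one_ne_zero, Multiset.replicate d m, fun ℓ hℓ => ?_, .of_forall fun η => by simp⟩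
  rwa [Multiset.eq_of_mem_replicate hℓ]

lemma congr (hs : PuiseuxParametrizable s) (hst : s =ᶠ[𝓝[≠] 0] t) : PuiseuxParametrizable t := by
  obtain ⟨M, hM, L, hL, hsL⟩ := hs
  refine ⟨M, hM, L, hL, ?_⟩
  filter_upwards [hsL, (tendsto_pow_nhdsNE_zero hM).eventually hst] with η h₁ h₂
  rw [← h₂, h₁]

lemma of_comp_pow {b : ℕ} (hb : b ≠ 0) (hs : PuiseuxParametrizable fun η => s (η ^ b)) :
    PuiseuxParametrizable s := by
  obtain ⟨M, hM, L, hL, hsL⟩ := hs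
  exact ⟨M * b, mul_ne_zero hM hb, L, hL, by simpa only [pow_mul] using hsL⟩

lemma add (hs : PuiseuxParametrizable s) (ht : PuiseuxParametrizable t) :
    PuiseuxParametrizable fun x => s x + t x := by
  obtain ⟨M, hM, L, hL, hsL⟩ := hs
  obtain ⟨N, hN, K, hK, htK⟩ := ht
  refine ⟨N * M, mul_ne_zero hN hM,
    L.map (fun ℓ η => ℓ (η ^ N)) + K.map (fun ℓ η => ℓ (η ^ M)), fun ℓ hℓ => ?_, ?_⟩
  · rcases Multiset.mem_add.1 hℓ with h | h <;> obtain ⟨ℓ', h', rfl⟩ := Multiset.mem_map.1 h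
    · exact analyticAt_comp_pow_zero (hL ℓ' h') hN
    · exact analyticAt_comp_pow_zero (hK ℓ' h') hM
  · filter_upwards [(tendsto_pow_nhdsNE_zero hN).eventually hsL,
      (tendsto_pow_nhdsNE_zero hM).eventually htK] with η h₁ h₂
    rw [pow_mul, h₁, ← pow_mul, mul_comm N M, pow_mul, h₂]
    simp [Multiset.map_map]

lemma map_mul_add (hs : PuiseuxParametrizable s) {c m : ℂ → ℂ} (hc : AnalyticAt ℂ c 0)
    (hm : AnalyticAt ℂ m 0) : PuiseuxParametrizable fun x => (s x).map (c x * · + m x) := by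
  obtain ⟨M, hM, L, hL, hsL⟩ := hs
  refine ⟨M, hM, L.map fun ℓ η => c (η ^ M) * ℓ η + m (η ^ M), fun ℓ hℓ => ?_, ?_⟩
  · obtain ⟨ℓ', h', rfl⟩ := Multiset.mem_map.1 hℓ
    exact ((analyticAt_comp_pow_zero hc hM).mul (hL ℓ' h')).add (analyticAt_comp_pow_zero hm hM)
  · filter_upwards [hsL] with η hη
    simp [hη, Multiset.map_map]

end PuiseuxParametrizable

lemma HolomorphicMultisetAt.eventually_eq_replicate_zero {t : ℂ → Multiset ℂ}
    (ht : HolomorphicMultisetAt t 0)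
    (h : ∀ i ∈ Finset.Icc 1 (t 0).card, ∀ᶠ x in 𝓝 0, (t x).esymm i = 0) :
    ∀ᶠ x in 𝓝 0, t x = Multiset.replicate (t 0).card 0 := by
  filter_upwards [(eventually_all_finset _).2 h, ht.eventually_card_eq] with x hx hcard
  refine multiset_eq_of_esymm_eq (by simp [hcard]) fun i hi => ?_
  rw [Multiset.card_replicate] at hi
  rw [hx i hi, multiset_esymm_replicate_zero _ (by grind)]

lemma HolomorphicMultisetAt.exists_centred {s : ℂ → Multiset ℂ} (hs : HolomorphicMultisetAt s 0) :
    ∃ (m : ℂ → ℂ) (t : ℂ → Multiset ℂ), AnalyticAt ℂ m 0 ∧ HolomorphicMultisetAt t 0 ∧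
      (t 0).card = (s 0).card ∧ (∀ᶠ x in 𝓝 0, (t x).esymm 1 = 0) ∧
      ∀ x, s x = (t x).map (· + m x) := by
  set m : ℂ → ℂ := fun x => ((s 0).card : ℂ)⁻¹ * (s x).sum
  have hm : HolomorphicAt m 0 := by
    have hsum : HolomorphicAt (fun x => (s x).sum) 0 := by simpa using hs 1
    fun_prop
  refine ⟨m, fun x => (s x).map (· - m x), holomorphicAt_iff_analyticAt.1 hm, hs.map_sub hm,
    by simp, ?_, by simp [Multiset.map_map]⟩
  filter_upwards [hs.eventually_card_eq] with x hx
  rw [multiset_esymm_one, Multiset.sum_map_sub, Multiset.map_id', Multiset.map_const',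
    Multiset.sum_replicate, hx, nsmul_eq_mul]
  rcases eq_or_ne (s 0).card 0 with h0 | h0
  · simp [Multiset.card_eq_zero.1 (hx.trans h0), m]
  · simp [m, h0]

theorem HolomorphicMultisetAt.puiseuxParametrizable {s : ℂ → Multiset ℂ}
    (hs : HolomorphicMultisetAt s 0) : PuiseuxParametrizable s := by
  induction hd : (s 0).card using Nat.strong_induction_on generalizing s with
  | _ d ih =>
    obtain ⟨m, t, hm, ht, hcard, ht1, hst⟩ := hs.exists_centred
    suffices PuiseuxParametrizable t by
      simpa [← hst] using this.map_mul_add (analyticAt_const (v := 1)) hm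
    by_cases hzero : ∀ i ∈ Finset.Icc 1 (t 0).card, ∀ᶠ x in 𝓝 0, (t x).esymm i = 0
    · have hrep := (ht.eventually_eq_replicate_zero hzero).filter_mono
        (nhdsWithin_le_nhds (s := {0}ᶜ))
      exact (PuiseuxParametrizable.replicate (t 0).card analyticAt_const).congr
        (hrep.mono fun x hx => hx.symm)
    push Not at hzero
    obtain ⟨b, q, u, hb, hu, hucard, htu, a, ha, a', ha', hne⟩ :=
      ht.exists_newton_puiseux_step ht1 hzero
    obtain ⟨u₁, u₂, hu₁, hu₂, hadd, hlt₁, hlt₂⟩ := hu.exists_add_of_ne ha ha' hne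
    have hd' : (u 0).card = d := by rw [hucard, hcard, hd]
    have hupar : PuiseuxParametrizable u := by
      simpa only [hadd] using (ih _ (hd' ▸ hlt₁) hu₁ rfl).add (ih _ (hd' ▸ hlt₂) hu₂ rfl)
    refine .of_comp_pow hb (.congr (hupar.map_mul_add (c := (· ^ q)) (by fun_prop)
      (analyticAt_const (v := 0))) ?_)
    filter_upwards [nhdsWithin_le_nhds htu] with η hη
    simp [hη]

/-! ### Curve selection -/

section CurveSelection

lemma exists_submodule_le_of_forall_mem {k V ι : Type*} [Field k] [Infinite k] [AddCommGroup V]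
    [Module k V] {P : Submodule k V} {K : ι → Submodule k V} {s : Finset ι}
    (h : ∀ g ∈ P, ∃ i ∈ s, g ∈ K i) : ∃ i ∈ s, P ≤ K i := by
  classical
  have htop : ⊤ ∈ s.image fun i => (K i).comap P.subtype := by
    refine Subspace.top_mem_of_biUnion_eq_univ (eq_univ_of_forall fun g => ?_)
    obtain ⟨i, hi, hgi⟩ := h g g.2
    exact mem_biUnion (Finset.mem_coe.2 (Finset.mem_image_of_mem _ hi)) hgi
  obtain ⟨i, hi, hK⟩ := Finset.mem_image.1 htop
  exact ⟨i, hi, Submodule.comap_subtype_eq_top.1 hK⟩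

lemma sum_range_eq_pow_mul_sum_range {R : Type*} [CommSemiring R] {c : ℕ → R} {d e : ℕ}
    (hed : e ≤ d) (hc : ∀ j, e < j → j ≤ d → c j = 0) (x : R) :
    ∑ j ∈ Finset.range (d + 1), c j * x ^ (d - j) =
      x ^ (d - e) * ∑ j ∈ Finset.range (e + 1), c j * x ^ (e - j) := by
  rw [Finset.mul_sum, ← Finset.sum_subset (Finset.range_mono (by lia : e + 1 ≤ d + 1))]
  · refine Finset.sum_congr rfl fun j hj => ?_
    have hje : j ≤ e := Finset.mem_range_succ_iff.1 hj
    rw [show d - j = (d - e) + (e - j) by lia, pow_add]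
    ring
  · intro j hjd hje
    rw [Finset.mem_range] at hjd hje
    rw [hc j (by lia) (by lia), zero_mul]

lemma ne_zero_of_sum_range_eq_zero {R : Type*} [CommSemiring R] {c : ℕ → R} {e : ℕ} {x : R}
    (hsum : ∑ j ∈ Finset.range (e + 1), c j * x ^ (e - j) = 0) (hc : c e ≠ 0) : x ≠ 0 := by
  rintro rfl
  rw [Finset.sum_range_succ, Finset.sum_eq_zero, zero_add, Nat.sub_self, pow_zero, mul_one] at hsum
  · exact hc hsum
  · intro j hj
    rw [zero_pow (Nat.sub_ne_zero_of_lt (Finset.mem_range.1 hj)), mul_zero]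

variable {E F : Type*} [NormedAddCommGroup E] [NormedSpace ℂ E]
  [NormedAddCommGroup F] [NormedSpace ℂ F]

lemma HolomorphicAt.exists_smul_ne_zero {g : E → ℂ} (hg : HolomorphicAt g 0)
    (hne : ∃ᶠ x in 𝓝 0, g x ≠ 0) : ∃ v : E, ∀ᶠ t in 𝓝[≠] (0 : ℂ), g (t • v) ≠ 0 := by
  obtain ⟨R, hR, hball⟩ := eventually_nhds_iff_ball.1 hg.eventually
  obtain ⟨v, hgv, hvR⟩ := (hne.and_eventually (ball_mem_nhds (0 : E) hR)).exists
  set D : Set ℂ := (fun t : ℂ => t • v) ⁻¹' ball (0 : E) R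
  have hconvex : Convex ℝ D := (convex_ball (0 : E) R).linear_preimage
    ((LinearMap.toSpanSingleton ℂ E v).restrictScalars ℝ)
  have hanalytic : AnalyticOnNhd ℂ (fun t : ℂ => g (t • v)) D := fun t ht =>
    holomorphicAt_iff_analyticAt.1 <|
      .comp (g := g) (hball _ ht) (.of_differentiable (by fun_prop) t)
  have h0 : (0 : ℂ) ∈ D := by simp [D, hR]
  have h1 : (1 : ℂ) ∈ D := by simpa [D] using hvR
  refine ⟨v, not_frequently.1 fun hzero => hgv ?_⟩
  simpa using hanalytic.eqOn_zero_of_preconnected_of_frequently_eq_zero hconvex.isPreconnected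
    h0 hzero h1

/-- `γ` is the germ of a holomorphic arc satisfying every analytic equation at `γ 0` which holds
eventually along the filter `l`. -/
structure IsArcAlong (l : Filter E) (γ : ℂ → E) : Prop where
  holomorphicAt : HolomorphicAt γ 0
  eventually_eq_zero : ∀ g : E → ℂ, HolomorphicAt g (γ 0) → (∀ᶠ x in l, g x = 0) →
    ∀ᶠ t in 𝓝 0, g (γ t) = 0

lemma IsArcAlong.comp_pow {l : Filter E} {γ : ℂ → E} (hγ : IsArcAlong l γ) {M : ℕ} (hM : M ≠ 0) :
    IsArcAlong l fun η => γ (η ^ M) where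
  holomorphicAt := .comp (g := γ) (by simpa [hM] using hγ.holomorphicAt) (by fun_prop)
  eventually_eq_zero g hg hgl := by
    have hpow : Tendsto (fun η : ℂ => η ^ M) (𝓝 0) (𝓝 0) :=
      (continuous_pow M).tendsto' 0 0 (zero_pow hM)
    exact hpow.eventually (hγ.eventually_eq_zero g (by simpa [hM] using hg) hgl)

/-- Curve selection along `l` at `q`: any hypersurface avoided by `l` is avoided by some arc through
`q` along `l`, except at `q`. -/
def HasCurveSelection (l : Filter E) (q : E) : Prop :=
  ∀ h : E → ℂ, HolomorphicAt h q → (∀ᶠ x in l, h x ≠ 0) →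
    ∃ γ, IsArcAlong l γ ∧ γ 0 = q ∧ ∀ᶠ t in 𝓝[≠] 0, h (γ t) ≠ 0

lemma HasCurveSelection.of_leftInverse {l : Filter E} {q : E} {φ : E → F} {ψ : F → E}
    (hψφ : Function.LeftInverse ψ φ) (hψ : HolomorphicAt ψ (φ q))
    (hsel : HasCurveSelection (l.map φ) (φ q)) : HasCurveSelection l q := by
  have hcomp {g : E → ℂ} (hg : HolomorphicAt g q) : HolomorphicAt (fun y => g (ψ y)) (φ q) :=
    .comp (g := g) (by rwa [hψφ q]) hψ
  have hmap {p : E → Prop} (hp : ∀ᶠ x in l, p x) : ∀ᶠ y in l.map φ, p (ψ y) :=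
    eventually_map.2 (by simpa only [hψφ _] using hp)
  intro h hh hhl
  obtain ⟨γ, hγ, hγ0, hhγ⟩ := hsel _ (hcomp hh) (hmap hhl)
  have hψγ0 : ψ (γ 0) = q := by rw [hγ0, hψφ q]
  refine ⟨fun t => ψ (γ t), ⟨.comp (g := ψ) (hγ0 ▸ hψ) hγ.holomorphicAt, fun g hg hgl => ?_⟩,
    hψγ0, hhγ⟩
  rw [hψγ0] at hg
  exact hγ.eventually_eq_zero _ (hγ0 ▸ hcomp hg) (hmap hgl)

lemma HolomorphicMultisetAt.exists_lifts {θ : E → Multiset ℂ} (hθ : HolomorphicMultisetAt θ 0)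
    (hsmall : ∀ r > 0, ∀ᶠ x in 𝓝 0, ∀ a ∈ θ x, ‖a‖ < r) {γ : ℂ → E} (hγ : HolomorphicAt γ 0)
    (hγ0 : γ 0 = 0) :
    ∃ M ≠ 0, ∃ L : Multiset (ℂ → ℂ), (∀ ℓ ∈ L, HolomorphicAt ℓ 0 ∧ ℓ 0 = 0) ∧
      ∀ᶠ η in 𝓝[≠] 0, θ (γ (η ^ M)) = L.map fun ℓ => ℓ η := by
  obtain ⟨M, hM, L, hL, hlift⟩ := (HolomorphicMultisetAt.comp (hγ0 ▸ hθ) hγ).puiseuxParametrizable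
  refine ⟨M, hM, L, fun ℓ hℓ => ⟨holomorphicAt_iff_analyticAt.2 (hL ℓ hℓ), ?_⟩, hlift⟩
  have hbase : Tendsto (fun η : ℂ => γ (η ^ M)) (𝓝[≠] 0) (𝓝 0) :=
    (hγ0 ▸ hγ.continuousAt.tendsto.mono_left nhdsWithin_le_nhds).comp (tendsto_pow_nhdsNE_zero hM)
  refine tendsto_nhds_unique (l := 𝓝[≠] 0) (hL ℓ hℓ).continuousAt.continuousWithinAt.tendsto
    (Metric.tendsto_nhds.2 fun r hr => ?_)
  filter_upwards [hbase.eventually (hsmall r hr), hlift] with η hη hθη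
  rw [dist_zero_right]
  exact hη _ (hθη ▸ Multiset.mem_map_of_mem _ hℓ)

section Lift

variable {θ : E → Multiset ℂ} {l : Filter (E × ℂ)} {γ : ℂ → E} {L : Multiset (ℂ → ℂ)}

/-- The norm of `G` along the fibres of `θ` is an equation on the base, so it vanishes along `γ`. -/
lemma IsArcAlong.exists_lift_eq_zero [FiniteDimensional ℂ E] (hθ : HolomorphicMultisetAt θ 0)
    (hsmall : ∀ r > 0, ∀ᶠ x in 𝓝 0, ∀ a ∈ θ x, ‖a‖ < r) (hmem : ∀ᶠ p in l, p.2 ∈ θ p.1)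
    (hγ : IsArcAlong (l.map Prod.fst) γ) (hγ0 : γ 0 = 0)
    (hL : ∀ ℓ ∈ L, HolomorphicAt ℓ 0 ∧ ℓ 0 = 0)
    (hlift : ∀ᶠ η in 𝓝[≠] 0, θ (γ η) = L.map fun ℓ => ℓ η) {G : E × ℂ → ℂ}
    (hG : HolomorphicAt G 0) (hGl : ∀ᶠ p in l, G p = 0) :
    ∃ ℓ ∈ L, ∀ᶠ η in 𝓝 0, G (γ η, ℓ η) = 0 := by
  classical
  set norm : E → ℂ := fun x => (rootPoly ((θ x).map fun a => G (x, a))).eval 0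
  have hnorm : HolomorphicAt norm 0 :=
    .comp (f := fun x => (x, (0 : ℂ)))
      ((hθ.map_of_eventually_norm_lt hsmall hG).eval_rootPoly 0) (by fun_prop)
  have hnorm_l : ∀ᶠ x in l.map Prod.fst, norm x = 0 := by
    refine eventually_map.2 ?_
    filter_upwards [hmem, hGl] with p hp hGp
    exact eval_rootPoly_eq_zero_iff.2 (Multiset.mem_map.2 ⟨p.2, hp, hGp⟩)
  have hnorm_γ := hγ.eventually_eq_zero norm (hγ0 ▸ hnorm) hnorm_l
  by_contra! hne
  have hne' : ∀ ℓ ∈ L, ∀ᶠ η in 𝓝[≠] 0, G (γ η, ℓ η) ≠ 0 := by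
    intro ℓ hℓ
    have hanalytic : HolomorphicAt (fun η => G (γ η, ℓ η)) 0 :=
      .comp (by rwa [hγ0, (hL ℓ hℓ).2]) (hγ.holomorphicAt.prodMk (hL ℓ hℓ).1)
    exact (holomorphicAt_iff_analyticAt.1 hanalytic).eventually_eq_zero_or_eventually_ne_zero
      |>.resolve_left (not_eventually.2 (hne ℓ hℓ))
  have hall : ∀ᶠ η in 𝓝[≠] (0 : ℂ), ∀ ℓ ∈ L.toFinset, G (γ η, ℓ η) ≠ 0 :=
    (eventually_all_finset _).2 fun ℓ hℓ => hne' ℓ (Multiset.mem_toFinset.1 hℓ)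
  obtain ⟨η, hη, hθη, hGη⟩ := ((hnorm_γ.filter_mono nhdsWithin_le_nhds).and
    (hlift.and hall)).exists
  obtain ⟨a, ha, hGa⟩ := Multiset.mem_map.1 (eval_rootPoly_eq_zero_iff.1 hη)
  obtain ⟨ℓ, hℓ, rfl⟩ := Multiset.mem_map.1 (hθη ▸ ha)
  exact hGη ℓ (Multiset.mem_toFinset.2 hℓ) hGa

/-- The functions holomorphic at `x`, as a vector space. -/
def holomorphicSubmodule (x : E) : Submodule ℂ (E → ℂ) where
  carrier := {g | HolomorphicAt g x}
  add_mem' hf hg := hf.add hg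
  zero_mem' := .const 0 x
  smul_mem' c _ hg := .mul (.const c x) hg

/-- The functions vanishing eventually along `l`, that is, the equations of `l`. -/
def vanishingSubmodule {α : Type*} (l : Filter α) : Submodule ℂ (α → ℂ) where
  carrier := {g | ∀ᶠ x in l, g x = 0}
  add_mem' hf hg := by
    filter_upwards [hf, hg] with x hfx hgx
    rw [Pi.add_apply, hfx, hgx, add_zero]
  zero_mem' := .of_forall fun _ => rfl
  smul_mem' c _ hg := hg.mono fun x hgx => by rw [Pi.smul_apply, hgx, smul_zero]

/-- A vector space is not a finite union of proper subspaces, so a single lift satisfies all the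
equations. -/
lemma IsArcAlong.exists_lift [FiniteDimensional ℂ E] (hθ : HolomorphicMultisetAt θ 0)
    (hsmall : ∀ r > 0, ∀ᶠ x in 𝓝 0, ∀ a ∈ θ x, ‖a‖ < r) (hmem : ∀ᶠ p in l, p.2 ∈ θ p.1)
    (hγ : IsArcAlong (l.map Prod.fst) γ) (hγ0 : γ 0 = 0)
    (hL : ∀ ℓ ∈ L, HolomorphicAt ℓ 0 ∧ ℓ 0 = 0)
    (hlift : ∀ᶠ η in 𝓝[≠] 0, θ (γ η) = L.map fun ℓ => ℓ η) :
    ∃ ℓ : ℂ → ℂ, ℓ 0 = 0 ∧ IsArcAlong l fun η => (γ η, ℓ η) := by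
  classical
  obtain ⟨ℓ, hℓ, hle⟩ := exists_submodule_le_of_forall_mem
    (P := holomorphicSubmodule (0 : E × ℂ) ⊓ vanishingSubmodule l) (s := L.toFinset)
    (K := fun ℓ => (vanishingSubmodule (𝓝 (0 : ℂ))).comap
      (LinearMap.funLeft ℂ ℂ fun η => (γ η, ℓ η))) fun G hG => by
        obtain ⟨ℓ, hℓ, hGℓ⟩ := hγ.exists_lift_eq_zero hθ hsmall hmem hγ0 hL hlift hG.1 hG.2
        exact ⟨ℓ, Multiset.mem_toFinset.2 hℓ, hGℓ⟩
  have hℓ' := hL ℓ (Multiset.mem_toFinset.1 hℓ)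
  refine ⟨ℓ, hℓ'.2, hγ.holomorphicAt.prodMk hℓ'.1, fun g hg hgl => hle ⟨?_, hgl⟩⟩
  rwa [hγ0, hℓ'.2] at hg

end Lift

/-- The equation is the characteristic polynomial of `h` along the fibres of `θ`, without the
coefficients after the last one, `c`, that does not vanish along `𝒰`. -/
lemma exists_equation_imp_ne_zero [FiniteDimensional ℂ E] {θ : E → Multiset ℂ}
    (hθ : HolomorphicMultisetAt θ 0)
    (hsmall : ∀ r > 0, ∀ᶠ x in 𝓝 0, ∀ a ∈ θ x, ‖a‖ < r) {𝒰 : Ultrafilter (E × ℂ)}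
    (h𝒰 : (𝒰 : Filter (E × ℂ)) ≤ 𝓝 0) (hmem : ∀ᶠ p : E × ℂ in 𝒰, p.2 ∈ θ p.1) {h : E × ℂ → ℂ}
    (hh : HolomorphicAt h 0) (hh𝒰 : ∀ᶠ p in 𝒰, h p ≠ 0) :
    ∃ c : E → ℂ, HolomorphicAt c 0 ∧ (∀ᶠ p : E × ℂ in 𝒰, c p.1 ≠ 0) ∧
      ∃ g : E × ℂ → ℂ, HolomorphicAt g 0 ∧ (∀ᶠ p in 𝒰, g p = 0) ∧
        ∀ p, g p = 0 → c p.1 ≠ 0 → h p ≠ 0 := by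
  classical
  have hmap := hθ.map_of_eventually_norm_lt hsmall hh
  set c : ℕ → E → ℂ := fun j x => (-1) ^ j * ((θ x).map fun a => h (x, a)).esymm j
  have hc : ∀ j, HolomorphicAt (c j) 0 := fun j => (HolomorphicAt.const _ _).mul (hmap.esymm j)
  set d := (θ 0).card
  set e := Nat.findGreatest (fun j => ∀ᶠ p : E × ℂ in 𝒰, c j p.1 ≠ 0) d
  have hed : e ≤ d := Nat.findGreatest_le d
  have hce : ∀ᶠ p : E × ℂ in 𝒰, c e p.1 ≠ 0 :=
    Nat.findGreatest_spec (P := fun j => ∀ᶠ p : E × ℂ in 𝒰, c j p.1 ≠ 0) (Nat.zero_le d)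
      (.of_forall fun p => by simp [c, Multiset.esymm])
  have hc_eq_zero : ∀ᶠ p : E × ℂ in 𝒰, ∀ j ∈ Finset.Ioc e d, c j p.1 = 0 := by
    refine (eventually_all_finset _).2 fun j hj => ?_
    obtain ⟨hej, hjd⟩ := Finset.mem_Ioc.1 hj
    simpa only [not_not] using Ultrafilter.eventually_not.2 (Nat.findGreatest_is_greatest hej hjd)
  refine ⟨c e, hc e, hce, fun p => ∑ j ∈ Finset.range (e + 1), c j p.1 * h p ^ (e - j),
    .sum fun j _ => .mul (.comp (g := c j) (hc j) (by fun_prop)) (hh.pow _), ?_,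
    fun p hsum hcp => ne_zero_of_sum_range_eq_zero hsum hcp⟩
  have hcard : ∀ᶠ p : E × ℂ in 𝒰, (θ p.1).card = d :=
    h𝒰 ((continuous_fst.tendsto' (0 : E × ℂ) 0 rfl).eventually hθ.eventually_card_eq)
  filter_upwards [hmem, hh𝒰, hc_eq_zero, hcard] with p hp hhp hcp hcard_p
  have hroot : (rootPoly ((θ p.1).map fun a => h (p.1, a))).eval (h p) = 0 :=
    eval_rootPoly_eq_zero_iff.2 (Multiset.mem_map_of_mem (fun a => h (p.1, a)) hp)
  rw [eval_rootPoly_eq_sum, Multiset.card_map, hcard_p, sum_range_eq_pow_mul_sum_range hed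
    fun j hej hjd => hcp j (Finset.mem_Ioc.2 ⟨hej, hjd⟩)] at hroot
  exact (mul_eq_zero.1 hroot).resolve_left (pow_ne_zero _ hhp)

/-- The equation `W` exhibits the points of `𝒰` on a branched cover of `E`, to which arcs in `E`
lift. -/
lemma HasCurveSelection.of_map_fst [FiniteDimensional ℂ E] {𝒰 : Ultrafilter (E × ℂ)}
    (h𝒰 : (𝒰 : Filter (E × ℂ)) ≤ 𝓝 0)
    (hsel : HasCurveSelection ((𝒰 : Filter (E × ℂ)).map Prod.fst) 0) {W : E × ℂ → ℂ}
    (hW : HolomorphicAt W 0) (hW𝒰 : ∀ᶠ p in 𝒰, W p = 0)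
    (hW0 : ∀ᶠ z in 𝓝[≠] (0 : ℂ), W (0, z) ≠ 0) : HasCurveSelection (𝒰 : Filter (E × ℂ)) 0 := by
  intro h hh hh𝒰
  obtain ⟨θ, hθ, hsmall, r, hr, hroot⟩ := exists_holomorphicMultisetAt_small_zeros hW hW0
  have hmem : ∀ᶠ p : E × ℂ in 𝒰, p.2 ∈ θ p.1 := by
    have hsnd : ∀ᶠ p : E × ℂ in 𝓝 0, ‖p.2‖ < r :=
      (continuous_snd.norm.tendsto' _ _ (by simp)).eventually (gt_mem_nhds hr)
    filter_upwards [h𝒰 hsnd, h𝒰 (continuous_fst.continuousAt.eventually hroot), hW𝒰]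
      with p hp2 hp1 hWp using hp1 _ hp2 hWp
  obtain ⟨c, hc, hc𝒰, g, hg, hg𝒰, hgc⟩ := exists_equation_imp_ne_zero hθ hsmall h𝒰 hmem hh hh𝒰
  obtain ⟨γ, hγ, hγ0, hcγ⟩ := hsel c hc hc𝒰
  obtain ⟨M, hM, L, hL, hlift⟩ := hθ.exists_lifts hsmall hγ.holomorphicAt hγ0
  have hγM0 : γ (0 ^ M) = 0 := by rw [zero_pow hM, hγ0]
  obtain ⟨ℓ, hℓ0, hℓ⟩ := (hγ.comp_pow hM).exists_lift hθ hsmall hmem hγM0 hL hlift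
  have hstart : (γ (0 ^ M), ℓ 0) = (0 : E × ℂ) := Prod.ext hγM0 hℓ0
  refine ⟨_, hℓ, hstart, ?_⟩
  filter_upwards [(hℓ.eventually_eq_zero g (hstart ▸ hg) hg𝒰).filter_mono nhdsWithin_le_nhds,
    (tendsto_pow_nhdsNE_zero hM).eventually hcγ] with η hgη hcη using hgc _ hgη hcη

lemma hasCurveSelection_of_eventually_zero {l : Filter E} [l.NeBot] (hl : l ≤ 𝓝 0)
    (htrivial : ∀ g : E → ℂ, HolomorphicAt g 0 → (∀ᶠ x in l, g x = 0) → ∀ᶠ x in 𝓝 0, g x = 0) :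
    HasCurveSelection l 0 := by
  intro h hh hhl
  obtain ⟨v, hv⟩ := hh.exists_smul_ne_zero (hhl.frequently.filter_mono hl)
  refine ⟨fun t => t • v, ⟨.of_differentiable (by fun_prop) 0, fun g hg hgl => ?_⟩,
    zero_smul ℂ v, hv⟩
  have hline : Tendsto (fun t : ℂ => t • v) (𝓝 0) (𝓝 0) :=
    (by fun_prop : Continuous fun t : ℂ => t • v).tendsto' _ _ (zero_smul ℂ v)
  exact hline.eventually (htrivial g (by simpa using hg) hgl)

lemma exists_linearEquiv_ker_prod {v : E} (hv : v ≠ 0) :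
    ∃ (φ : E →L[ℂ] ℂ) (A : E ≃L[ℂ] φ.ker × ℂ), φ v ≠ 0 ∧ ∀ z : ℂ, A.symm (0, z) = z • v := by
  obtain ⟨φ, hφ⟩ := SeparatingDual.exists_eq_one (R := ℂ) hv
  have hinv : Function.RightInverse (ContinuousLinearMap.toSpanSingleton ℂ v) φ :=
    fun z => by simp [hφ]
  refine ⟨φ, (ContinuousLinearEquiv.equivOfRightInverse φ _ hinv).trans
    (.prodComm ℂ ℂ φ.ker), by simp [hφ], fun z => ?_⟩
  exact (ContinuousLinearEquiv.equivOfRightInverse_symm_apply φ _ hinv (z, 0)).trans (by simp)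

/-- By induction on the dimension: a direction on which some equation along the ultrafilter is
nontrivial is split off. -/
lemma hasCurveSelection_zero (N : ℕ) : ∀ {E : Type*} [NormedAddCommGroup E] [NormedSpace ℂ E]
    [FiniteDimensional ℂ E], Module.finrank ℂ E = N → ∀ {𝒰 : Ultrafilter E},
    (𝒰 : Filter E) ≤ 𝓝 0 → HasCurveSelection (𝒰 : Filter E) 0 := by
  induction N using Nat.strong_induction_on with
  | _ N ih =>
  intro E _ _ _ hN 𝒰 h𝒰
  by_cases! htrivial : ∀ g : E → ℂ, HolomorphicAt g 0 → (∀ᶠ x in 𝒰, g x = 0) →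
    ∀ᶠ x in 𝓝 0, g x = 0
  · exact hasCurveSelection_of_eventually_zero h𝒰 htrivial
  obtain ⟨W, hW, hW𝒰, hWne⟩ := htrivial
  obtain ⟨v, hv⟩ := hW.exists_smul_ne_zero hWne
  have hW0 : W 0 = 0 := tendsto_nhds_unique (hW.continuousAt.tendsto.mono_left h𝒰)
    (tendsto_const_nhds.congr' (hW𝒰.mono fun x hx => hx.symm))
  have hv0 : v ≠ 0 := by
    rintro rfl
    simpa [hW0] using hv.exists
  obtain ⟨φ, A, hφv, hA⟩ := exists_linearEquiv_ker_prod hv0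
  have hlt : Module.finrank ℂ φ.ker < N := hN ▸ Submodule.finrank_lt fun htop =>
    hφv (LinearMap.mem_ker.1 (htop.symm ▸ Submodule.mem_top : v ∈ φ.ker))
  have hAsymm : HolomorphicAt A.symm 0 := .of_differentiable A.symm.differentiable 0
  refine .of_leftInverse (φ := A) A.symm_apply_apply (by rwa [map_zero]) ?_
  have hle : (𝒰.map A : Filter (φ.ker × ℂ)) ≤ 𝓝 0 :=
    (map_mono h𝒰).trans (A.continuous.tendsto' _ _ (map_zero A))
  have hfst : ((𝒰.map A).map Prod.fst : Filter φ.ker) ≤ 𝓝 0 :=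
    (map_mono hle).trans (continuous_fst.tendsto _)
  rw [map_zero]
  exact .of_map_fst (W := fun p => W (A.symm p)) hle (ih _ hlt rfl hfst)
    (.comp (g := W) (by rwa [map_zero]) hAsymm) (eventually_map.2 (by simpa using hW𝒰))
    (by simpa only [hA] using hv)

theorem hasCurveSelection_map [FiniteDimensional ℂ E] {X : Type*} (𝒱 : Ultrafilter X) {Ψ : X → E}
    {q : E} (hΨ : Tendsto Ψ 𝒱 (𝓝 q)) : HasCurveSelection (map Ψ 𝒱) q := by
  refine .of_leftInverse (φ := (· - q)) (ψ := (· + q)) (fun x => sub_add_cancel x q)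
    (by fun_prop) ?_
  rw [sub_self]
  have hsub : Tendsto (· - q) (𝓝 q) (𝓝 0) := (continuous_sub_right q).tendsto' _ _ (sub_self q)
  exact hasCurveSelection_zero _ rfl (𝒰 := (𝒱.map Ψ).map (· - q)) ((map_mono hΨ).trans hsub)

end CurveSelection

/-! ### Łojasiewicz-type inequalities -/

section Lojasiewicz

lemma exists_ultrafilter_of_frequently {X : Type*} {l : Filter X} {p : X → Prop}
    (h : ∃ᶠ x in l, p x) : ∃ 𝒱 : Ultrafilter X, (𝒱 : Filter X) ≤ l ∧ ∀ᶠ x in 𝒱, p x := by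
  have := frequently_iff_neBot.1 h
  have hle := Ultrafilter.of_le (l ⊓ 𝓟 {x | p x})
  exact ⟨_, hle.trans inf_le_left, le_principal_iff.1 (hle.trans inf_le_right)⟩

lemma exists_tendsto_of_eventually_norm_le {X F : Type*} [SeminormedAddCommGroup F] [ProperSpace F]
    {𝒱 : Ultrafilter X} {φ : X → F} {C : ℝ} (h : ∀ᶠ x in 𝒱, ‖φ x‖ ≤ C) :
    ∃ y, Tendsto φ 𝒱 (𝓝 y) := by
  obtain ⟨y, -, hy⟩ := (isCompact_closedBall (0 : F) C).ultrafilter_le_nhds' (𝒱.map φ)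
    (h.mono fun x hx => mem_closedBall_zero_iff.2 hx)
  exact ⟨y, hy⟩

lemma exists_tendsto_mul_logDeriv {φ : ℂ → ℂ} (hφ : HolomorphicAt φ 0) (h0 : φ 0 = 0)
    (hne : ∀ᶠ t in 𝓝[≠] 0, φ t ≠ 0) :
    ∃ k : ℕ, k ≠ 0 ∧ Tendsto (fun t => t * logDeriv φ t) (𝓝[≠] 0) (𝓝 k) := by
  have hφ_analytic := holomorphicAt_iff_analyticAt.1 hφ
  obtain ⟨k, g, hg, hg0, hφg⟩ := hφ_analytic.exists_eventuallyEq_pow_smul_nonzero_iff.2 fun hzero =>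
    (hne.and (hzero.filter_mono nhdsWithin_le_nhds)).exists.elim fun t ht => ht.1 ht.2
  simp only [sub_zero, smul_eq_mul] at hφg
  refine ⟨k, ?_, ?_⟩
  · rintro rfl
    exact hg0 (by simpa only [h0, pow_zero, one_mul] using hφg.self_of_nhds.symm)
  have hlim : Tendsto (fun t => k + t * logDeriv g t) (𝓝[≠] 0) (𝓝 k) := by
    have hcont : ContinuousAt (fun t => k + t * logDeriv g t) 0 := by
      simp only [logDeriv_apply]
      have := hg.deriv.continuousAt
      have := hg.continuousAt
      fun_prop (disch := assumption)
    simpa only [zero_mul, add_zero] using hcont.tendsto.mono_left nhdsWithin_le_nhds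
  refine hlim.congr' ?_
  filter_upwards [hφg.eventually_nhds.filter_mono nhdsWithin_le_nhds, self_mem_nhdsWithin,
    (hg.continuousAt.eventually_ne hg0).filter_mono nhdsWithin_le_nhds,
    hg.eventually_analyticAt.filter_mono nhdsWithin_le_nhds] with t hφt ht hgt hgt_analytic
  have ht0 : t ≠ 0 := ht
  rw [(logDeriv_congr_nhds hφt).self_of_nhds,
    logDeriv_mul (f := (· ^ k)) t (pow_ne_zero k ht0) hgt (by fun_prop)
    hgt_analytic.differentiableAt, logDeriv_pow]
  field_simp

variable {E : Type*} [NormedAddCommGroup E] [NormedSpace ℂ E] {f : E → ℂ} {p : E}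

lemma eventually_eq_zero_of_forall_apply [FiniteDimensional ℂ E] {X : Type*} {l : Filter X}
    {L : X → E →L[ℂ] ℂ} (h : ∀ v, ∀ᶠ x in l, L x v = 0) : ∀ᶠ x in l, L x = 0 := by
  set b := Module.finBasis ℂ E
  filter_upwards [eventually_all.2 fun i => h (b i)] with x hx
  exact ContinuousLinearMap.coe_injective (b.ext hx)

lemma mul_logDeriv_comp_add_smul {T : ℂ → ℂ} {u : ℂ → E} {t b : ℂ} {α : E →L[ℂ] ℂ}
    (hf : DifferentiableAt ℂ f (p + T t • u t)) (hT : DifferentiableAt ℂ T t)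
    (hu : DifferentiableAt ℂ u t) (hne : T t * f (p + T t • u t) ≠ 0)
    (heq : (b * T t) • fderiv ℂ f (p + T t • u t) = f (p + T t • u t) • α) :
    logDeriv (fun t => f (p + T t • u t)) t * b = logDeriv T t * α (u t) + α (deriv u t) := by
  have hderiv : deriv (fun t => f (p + T t • u t)) t =
      fderiv ℂ f (p + T t • u t) (T t • deriv u t + deriv T t • u t) :=
    (hf.hasFDerivAt.comp_hasDerivAt t ((hT.hasDerivAt.smul hu.hasDerivAt).const_add p)).deriv
  have hrel : b * T t * deriv (fun t => f (p + T t • u t)) t =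
      f (p + T t • u t) * (T t * α (deriv u t) + deriv T t * α (u t)) := by
    rw [hderiv]
    simpa using DFunLike.congr_fun heq (T t • deriv u t + deriv T t • u t)
  have hTt := left_ne_zero_of_mul hne
  have hft := right_ne_zero_of_mul hne
  simp only [logDeriv_apply]
  field_simp
  linear_combination hrel

/-- `k` and `m` are the orders of vanishing of `f (p + T u)` and of `T`. -/
lemma HolomorphicAt.exists_order_mul_eq [CompleteSpace E] (hf : HolomorphicAt f p) (hp : f p = 0)
    {T b : ℂ → ℂ} {u : ℂ → E} {α : ℂ → E →L[ℂ] ℂ} (hT : HolomorphicAt T 0) (hT0 : T 0 = 0)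
    (hu : HolomorphicAt u 0) (hα : ContinuousAt α 0) (hb : ContinuousAt b 0)
    (hne : ∀ᶠ t in 𝓝[≠] 0, T t * f (p + T t • u t) ≠ 0)
    (heq : ∀ᶠ t in 𝓝 0,
      (b t * T t) • fderiv ℂ f (p + T t • u t) = f (p + T t • u t) • α t) :
    ∃ k m : ℕ, k ≠ 0 ∧ m ≠ 0 ∧ k * b 0 = m * α 0 (u 0) := by
  have hx0 : p + T 0 • u 0 = p := by rw [hT0, zero_smul, add_zero]
  have hx : HolomorphicAt (fun t => p + T t • u t) 0 := by fun_prop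
  have hfx : HolomorphicAt f (p + T 0 • u 0) := by rwa [hx0]
  obtain ⟨k, hk, hlim_f⟩ := exists_tendsto_mul_logDeriv
    (φ := fun t => f (p + T t • u t)) (.comp (g := f) hfx hx) (by rw [hx0, hp])
    (hne.mono fun t => right_ne_zero_of_mul)
  obtain ⟨m, hm, hlim_T⟩ := exists_tendsto_mul_logDeriv hT hT0
    (hne.mono fun t => left_ne_zero_of_mul)
  refine ⟨k, m, hk, hm, ?_⟩
  have hu' := (holomorphicAt_iff_analyticAt.1 hu).deriv.continuousAt
  have hlim_left := hlim_f.mul (hb.tendsto.mono_left nhdsWithin_le_nhds)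
  have hlim_right := hlim_T.mul
    ((hα.clm_apply hu.continuousAt).tendsto.mono_left nhdsWithin_le_nhds)
  have hlim_zero : Tendsto (fun t => t * α t (deriv u t)) (𝓝[≠] 0) (𝓝 0) := by
    have hcont : ContinuousAt (fun t => t * α t (deriv u t)) 0 :=
      continuousAt_id.mul (hα.clm_apply hu')
    simpa only [zero_mul] using hcont.tendsto.mono_left nhdsWithin_le_nhds
  refine tendsto_nhds_unique hlim_left
    ((add_zero (_ : ℂ) ▸ hlim_right.add hlim_zero).congr' ?_)
  filter_upwards [heq.filter_mono nhdsWithin_le_nhds, hne, hT.filter_mono nhdsWithin_le_nhds,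
    hu.filter_mono nhdsWithin_le_nhds, (hx.continuousAt.eventually hfx).filter_mono
      nhdsWithin_le_nhds] with t heq_t hne_t hT_t hu_t hf_t
  linear_combination -t * mul_logDeriv_comp_add_smul hf_t hT_t hu_t hne_t heq_t

/-- Curve selection turns a family of points along an ultrafilter into an arc. -/
lemma HolomorphicAt.exists_order_mul_limit_eq [FiniteDimensional ℂ E] (hf : HolomorphicAt f p)
    (hp : f p = 0) {X : Type*} {𝒱 : Ultrafilter X} {T b : X → ℂ} {u : X → E} {α : X → E →L[ℂ] ℂ}
    {b₀ : ℂ} {u₀ : E} {α₀ : E →L[ℂ] ℂ} (hT : Tendsto T 𝒱 (𝓝 0)) (hu : Tendsto u 𝒱 (𝓝 u₀))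
    (hα : Tendsto α 𝒱 (𝓝 α₀)) (hb : Tendsto b 𝒱 (𝓝 b₀))
    (hne : ∀ᶠ x in 𝒱, T x * f (p + T x • u x) ≠ 0)
    (heq : ∀ᶠ x in 𝒱,
      (b x * T x) • fderiv ℂ f (p + T x • u x) = f (p + T x • u x) • α x) :
    ∃ k m : ℕ, k ≠ 0 ∧ m ≠ 0 ∧ k * b₀ = m * α₀ u₀ := by
  have := FiniteDimensional.complete ℂ E
  set q : ℂ × E × (E →L[ℂ] ℂ) × ℂ := (0, u₀, α₀, b₀)
  have hΨ := hT.prodMk_nhds (hu.prodMk_nhds (hα.prodMk_nhds hb))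
  have hfst : HolomorphicAt (fun y : ℂ × E × (E →L[ℂ] ℂ) × ℂ => p + y.1 • y.2.1) q := by fun_prop
  have hcomp {g : E → ℂ} (hg : HolomorphicAt g p) :
      HolomorphicAt (fun y : ℂ × E × (E →L[ℂ] ℂ) × ℂ => g (p + y.1 • y.2.1)) q :=
    .comp (g := g) (by simpa [q] using hg) hfst
  obtain ⟨γ, hγ, hγ0, hneγ⟩ := hasCurveSelection_map 𝒱 hΨ
    (fun y => y.1 * f (p + y.1 • y.2.1)) (.mul (.fst (.id q)) (hcomp hf)) hne
  have heqγ : ∀ᶠ t in 𝓝 0, ((γ t).2.2.2 * (γ t).1) • fderiv ℂ f (p + (γ t).1 • (γ t).2.1) -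
      f (p + (γ t).1 • (γ t).2.1) • (γ t).2.2.1 = 0 := by
    refine eventually_eq_zero_of_forall_apply fun v => hγ.eventually_eq_zero
      (fun y => ((y.2.2.2 * y.1) • fderiv ℂ f (p + y.1 • y.2.1) -
        f (p + y.1 • y.2.1) • y.2.2.1) v) ?_ ?_
    · have happly : HolomorphicAt (fun y : ℂ × E × (E →L[ℂ] ℂ) × ℂ => y.2.2.1 v) q :=
        .of_differentiable (by fun_prop) q
      rw [hγ0]
      exact .sub (.mul (by fun_prop) (hcomp (hf.fderiv_apply v))) (.mul (hcomp hf) happly)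
    · refine eventually_map.2 (heq.mono fun x hx => ?_)
      rw [hx, sub_self, zero_apply]
  have hγ_hol := hγ.holomorphicAt
  simpa [hγ0, q] using hf.exists_order_mul_eq hp hγ_hol.fst (by rw [hγ0]) hγ_hol.snd.fst
    hγ_hol.snd.snd.fst.continuousAt hγ_hol.snd.snd.snd.continuousAt hneγ
    (heqγ.mono fun t => sub_eq_zero.1)

lemma tendsto_norm_sub_nhds_zero {E : Type*} [NormedAddCommGroup E] (p : E) :
    Tendsto (fun x => (‖x - p‖ : ℂ)) (𝓝 p) (𝓝 0) :=
  (by fun_prop : Continuous fun x => (‖x - p‖ : ℂ)).tendsto' _ _ (by simp)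

lemma add_norm_smul_inv_norm_smul_sub (p x : E) :
    p + (‖x - p‖ : ℂ) • (‖x - p‖ : ℂ)⁻¹ • (x - p) = x := by
  rcases eq_or_ne x p with rfl | hx
  · simp
  · rw [smul_inv_smul₀ (by simpa [sub_eq_zero] using hx), add_sub_cancel]

lemma norm_sub_mul_apply_ne_zero (hp : f p = 0) {x : E} (hx : f x ≠ 0) :
    (‖x - p‖ : ℂ) * f (p + (‖x - p‖ : ℂ) • (‖x - p‖ : ℂ)⁻¹ • (x - p)) ≠ 0 := by
  rw [add_norm_smul_inv_norm_smul_sub]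
  exact mul_ne_zero (by simpa [sub_eq_zero] using ne_of_apply_ne f (hp ▸ hx)) hx

lemma norm_inv_norm_smul_le (w : E) : ‖(‖w‖ : ℂ)⁻¹ • w‖ ≤ 1 := by
  rw [norm_smul, norm_inv, Complex.norm_real, norm_norm]
  exact inv_mul_le_one

/-- Łojasiewicz's inequality in its weak form: otherwise `(‖x - p‖ / f x) • Df x` tends to `0` along
bad points `x`, and the order of vanishing of `f` along an arc of bad points would be `0`. -/
theorem HolomorphicAt.isLittleO_fderiv [FiniteDimensional ℂ E] (hf : HolomorphicAt f p)
    (hp : f p = 0) : f =o[𝓝 p] fderiv ℂ f := by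
  have : ProperSpace E := FiniteDimensional.proper ℂ E
  refine Asymptotics.isLittleO_iff.2 fun c hc => ?_
  by_contra! hbad
  obtain ⟨𝒱, h𝒱, hbad𝒱⟩ := exists_ultrafilter_of_frequently hbad
  replace hbad𝒱 : ∀ᶠ x in 𝒱, c * ‖fderiv ℂ f x‖ < ‖f x‖ := by simpa using hbad𝒱
  have hT := (tendsto_norm_sub_nhds_zero p).mono_left h𝒱
  obtain ⟨u₀, hu⟩ := exists_tendsto_of_eventually_norm_le (𝒱 := 𝒱)
    (.of_forall fun x : E => norm_inv_norm_smul_le (x - p))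
  have hne : ∀ᶠ x in 𝒱, f x ≠ 0 := hbad𝒱.mono fun x hx =>
    norm_pos_iff.1 ((by positivity : 0 ≤ c * ‖fderiv ℂ f x‖).trans_lt hx)
  have hα : Tendsto (fun x => ((‖x - p‖ : ℂ) * (f x)⁻¹) • fderiv ℂ f x) 𝒱 (𝓝 0) := by
    refine squeeze_zero_norm' (a := fun x => ‖x - p‖ * c⁻¹) ?_ ?_
    · filter_upwards [hbad𝒱, hne] with x hx hfx
      rw [norm_smul, norm_mul, Complex.norm_real, norm_norm, norm_inv, mul_assoc]
      gcongr
      rw [inv_mul_le_iff₀ (norm_pos_iff.2 hfx), ← div_eq_mul_inv, le_div_iff₀ hc, mul_comm]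
      exact hx.le
    · exact ((by fun_prop : Continuous fun x => ‖x - p‖ * c⁻¹).tendsto' p 0 (by simp)).mono_left
        h𝒱
  obtain ⟨k, m, hk, -, hkm⟩ := hf.exists_order_mul_limit_eq hp hT hu hα
    (tendsto_const_nhds (x := 1)) (hne.mono fun x => norm_sub_mul_apply_ne_zero hp) <|
    hne.mono fun x hx => by
      rw [add_norm_smul_inv_norm_smul_sub, one_mul, smul_smul, mul_left_comm,
        mul_inv_cancel₀ hx, mul_one]
  exact hk (by simpa using hkm)

open ComplexConjugate in
lemma exists_normalized_smul_eq {L : E →L[ℂ] ℂ} {w : E} {z : ℂ} {δ : ℝ} (hδ : 0 < δ)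
    (h : δ * (‖w‖ * ‖L‖ * ‖z‖) < |(L w * conj z).im|) :
    ∃ (b : ℝ) (α : E →L[ℂ] ℂ), ((b : ℂ) * ‖w‖) • L = z • α ∧ ‖α‖ + |b| = 1 ∧
      δ * ‖α‖ ≤ |(α ((‖w‖ : ℂ)⁻¹ • w)).im| := by
  have hLz : L w * conj z ≠ 0 := by
    rintro h0
    rw [h0, Complex.zero_im, abs_zero] at h
    exact h.not_ge (by positivity)
  have hz : 0 < ‖z‖ := by simpa using right_ne_zero_of_mul hLz
  have hw : (‖w‖ : ℂ) ≠ 0 := by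
    rw [Complex.ofReal_ne_zero, norm_ne_zero_iff]
    rintro rfl
    exact hLz (by rw [map_zero, zero_mul])
  set r := ‖w‖ * ‖L‖ + ‖z‖
  have hr : 0 < r := by positivity
  have hα : ‖((‖w‖ / (‖z‖ * r) : ℝ) * conj z) • L‖ = ‖w‖ * ‖L‖ / r := by
    rw [norm_smul, norm_mul, Complex.norm_real, RCLike.norm_conj,
      Real.norm_of_nonneg (by positivity)]
    field_simp
  refine ⟨‖z‖ / r, ((‖w‖ / (‖z‖ * r) : ℝ) * conj z) • L, ?_, ?_, ?_⟩
  · rw [smul_smul, mul_left_comm, Complex.mul_conj']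
    congr 1
    push_cast
    field_simp
  · rw [hα, abs_of_pos (by positivity), ← add_div, div_self hr.ne']
  · have hαw : ((‖w‖ / (‖z‖ * r) : ℝ) * conj z) • L ((‖w‖ : ℂ)⁻¹ • w) =
        ((‖z‖ * r)⁻¹ : ℝ) * (L w * conj z) := by
      rw [map_smul, smul_eq_mul, smul_eq_mul]
      push_cast
      field_simp
    rw [hα, smul_apply, hαw, Complex.im_ofReal_mul, abs_mul, abs_of_pos (by positivity),
      inv_mul_eq_div, ← mul_div_assoc, div_le_div_iff₀ hr (by positivity)]
    nlinarith

open ComplexConjugate in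
/-- The gradient of `arg f` is not nearly radial. Otherwise, along an arc of bad points in the
limit direction `u₀`, comparing logarithmic derivatives gives a positive rational multiple of the
real number `b₀` as value of the normalised derivative `α₀` at `u₀`, whereas `α₀ u₀` has imaginary
part at least `δ ‖α₀‖`. -/
theorem HolomorphicAt.isLittleO_im_fderiv_apply_sub [FiniteDimensional ℂ E]
    (hf : HolomorphicAt f p) (hp : f p = 0) :
    (fun x => (fderiv ℂ f x (x - p) * conj (f x)).im) =o[𝓝 p]
      fun x => ‖x - p‖ * ‖fderiv ℂ f x‖ * ‖f x‖ := by
  have : ProperSpace E := FiniteDimensional.proper ℂ E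
  have : ProperSpace (E →L[ℂ] ℂ) := FiniteDimensional.proper ℂ _
  refine Asymptotics.isLittleO_iff.2 fun δ hδ => ?_
  by_contra! hbad
  obtain ⟨𝒱, h𝒱, hbad𝒱⟩ := exists_ultrafilter_of_frequently hbad
  simp only [norm_mul, norm_norm] at hbad𝒱
  simp only [Real.norm_eq_abs] at hbad𝒱
  obtain ⟨b, hb⟩ := (hbad𝒱.mono fun x => exists_normalized_smul_eq hδ).choice
  obtain ⟨α, hα⟩ := hb.choice
  have hT := (tendsto_norm_sub_nhds_zero p).mono_left h𝒱
  obtain ⟨u₀, hu⟩ := exists_tendsto_of_eventually_norm_le (𝒱 := 𝒱)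
    (.of_forall fun x : E => norm_inv_norm_smul_le (x - p))
  obtain ⟨b₀, hb₀⟩ := exists_tendsto_of_eventually_norm_le (φ := b) (C := 1)
    (hα.mono fun x hx => by rw [← hx.2.1, Real.norm_eq_abs]; simp)
  obtain ⟨α₀, hα₀⟩ := exists_tendsto_of_eventually_norm_le (φ := α) (C := 1)
    (hα.mono fun x hx => by rw [← hx.2.1]; simp)
  have hnorm : ‖α₀‖ + |b₀| = 1 := tendsto_nhds_unique (hα₀.norm.add hb₀.abs)
    (tendsto_const_nhds.congr' (hα.mono fun x hx => hx.2.1.symm))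
  have hα₀u₀ := (isBoundedBilinearMap_apply.continuous.tendsto (α₀, u₀)).comp (hα₀.prodMk_nhds hu)
  have him : δ * ‖α₀‖ ≤ |(α₀ u₀).im| := le_of_tendsto_of_tendsto (hα₀.norm.const_mul δ)
    ((Complex.continuous_im.tendsto _).comp hα₀u₀).abs
    (hα.mono fun x hx => hx.2.2)
  have hne : ∀ᶠ x in 𝒱, f x ≠ 0 := hbad𝒱.mono fun x hx h0 => by simp [h0] at hx
  obtain ⟨k, m, hk, hm, hkm⟩ := hf.exists_order_mul_limit_eq hp hT hu hα₀
    ((Complex.continuous_ofReal.tendsto b₀).comp hb₀)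
    (hne.mono fun x => norm_sub_mul_apply_ne_zero hp) <| hα.mono fun x hx => by
      rw [add_norm_smul_inv_norm_smul_sub]
      exact hx.1
  have hreal : (α₀ u₀).im = 0 := by simpa [hm] using (congrArg Complex.im hkm).symm
  have hα₀_zero : α₀ = 0 := by
    rw [hreal, abs_zero] at him
    exact norm_le_zero_iff.1 (nonpos_of_mul_nonpos_right him hδ)
  have hb₀_zero : b₀ = 0 := by simpa [hα₀_zero, hk] using hkm
  simp [hα₀_zero, hb₀_zero] at hnorm

end Lojasiewicz

/-! ### Trajectories and cut-off vector fields -/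

section Trajectories

lemma norm_le_norm_mul_exp {V : Type*} [NormedAddCommGroup V] [NormedSpace ℝ V] {F F' : ℝ → V}
    {a b K : ℝ} (hab : a ≤ b) (hF : ∀ t ∈ Icc a b, HasDerivAt F (F' t) t)
    (hF' : ∀ t ∈ Icc a b, ‖F' t‖ ≤ K * ‖F t‖) : ‖F b‖ ≤ ‖F a‖ * Real.exp (K * (b - a)) := by
  simpa only [gronwallBound_ε0] using norm_le_gronwallBound_of_norm_deriv_right_le (ε := 0)
    (HasDerivAt.continuousOn hF)
    (fun t ht => (hF t (Ico_subset_Icc_self ht)).hasDerivWithinAt) le_rfl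
    (fun t ht => by simpa using hF' t (Ico_subset_Icc_self ht)) b (right_mem_Icc.2 hab)

lemma norm_left_le_norm_mul_exp {V : Type*} [NormedAddCommGroup V] [NormedSpace ℝ V]
    {F F' : ℝ → V} {a b K : ℝ} (hab : a ≤ b) (hF : ∀ t ∈ Icc a b, HasDerivAt F (F' t) t)
    (hF' : ∀ t ∈ Icc a b, ‖F' t‖ ≤ K * ‖F t‖) : ‖F a‖ ≤ ‖F b‖ * Real.exp (K * (b - a)) := by
  have hmem {t : ℝ} (ht : t ∈ Icc a b) : a + b - t ∈ Icc a b :=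
    ⟨by linarith [ht.2], by linarith [ht.1]⟩
  simpa using norm_le_norm_mul_exp hab (fun t ht => (hF _ (hmem ht)).comp_const_sub (a + b) t)
    fun t ht => by simpa using hF' _ (hmem ht)

lemma exists_real_mul_of_im_mul_conj_eq_zero {z w : ℂ} (hw : w ≠ 0)
    (h : (z * (starRingEnd ℂ) w).im = 0) : ∃ r : ℝ, z = r * w := by
  refine ⟨(z * (starRingEnd ℂ) w).re / ‖w‖ ^ 2, ?_⟩
  have hreal : ((z * (starRingEnd ℂ) w).re : ℂ) = z * (starRingEnd ℂ) w :=
    Complex.ext rfl h.symm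
  have hw' : (‖w‖ : ℂ) ≠ 0 := by simpa using hw
  rw [Complex.ofReal_div, hreal, Complex.ofReal_pow, div_mul_eq_mul_div, mul_assoc,
    Complex.conj_mul', mul_div_cancel_right₀ _ (pow_ne_zero 2 hw')]

/-- The imaginary part of `F t * conj (F a)` solves the same linear equation and vanishes at `a`. -/
lemma exists_real_mul_of_hasDerivAt {F : ℝ → ℂ} {ρ : ℝ → ℝ} {a b K : ℝ} (hab : a ≤ b)
    (hF : ∀ t ∈ Icc a b, HasDerivAt F (ρ t * F t) t) (hρ : ∀ t ∈ Icc a b, |ρ t| ≤ K)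
    (ha : F a ≠ 0) : ∃ r : ℝ, F b = r * F a := by
  refine exists_real_mul_of_im_mul_conj_eq_zero ha ?_
  set h : ℝ → ℝ := fun t => (F t * (starRingEnd ℂ) (F a)).im
  have hderiv : ∀ t ∈ Icc a b, HasDerivAt h (ρ t * h t) t := fun t ht => by
    refine (Complex.imCLM.hasFDerivAt.comp_hasDerivAt t
      ((hF t ht).mul_const ((starRingEnd ℂ) (F a)))).congr_deriv ?_
    simp only [h, Complex.imCLM_apply, mul_assoc, Complex.im_ofReal_mul]
  have hle := norm_le_norm_mul_exp hab hderiv fun t ht => by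
    rw [norm_mul]
    exact mul_le_mul_of_nonneg_right (hρ t ht) (norm_nonneg _)
  have ha_zero : h a = 0 := by simp only [h, Complex.mul_conj, Complex.ofReal_im]
  rw [ha_zero, norm_zero, zero_mul] at hle
  exact norm_le_zero_iff.1 hle

lemma exists_forall_hasDerivAt_of_lipschitzWith {V : Type*} [NormedAddCommGroup V]
    [NormedSpace ℝ V] [CompleteSpace V] {v : V → V} {K : NNReal} (hK : LipschitzWith K v) {M : ℝ}
    (hM : ∀ x, ‖v x‖ ≤ M) (x : V) :
    ∃ γ : ℝ → V, γ 0 = x ∧ ∀ t ∈ Icc (0 : ℝ) 1, HasDerivAt γ (v (γ t)) t := by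
  have hM0 : 0 ≤ M := (norm_nonneg _).trans (hM x)
  have hpl : IsPicardLindelof (fun _ => v) (⟨0, by norm_num, by norm_num⟩ : Icc (-1 : ℝ) 2) x
      (⟨2 * M, by positivity⟩ : NNReal) 0 ⟨M, hM0⟩ K :=
    .of_time_independent (fun y _ => hM y) hK.lipschitzOnWith (by
      change M * max ((2 : ℝ) - 0) (0 - (-1)) ≤ 2 * M - 0
      norm_num
      linarith)
  obtain ⟨γ, h0, hγ⟩ := hpl.exists_eq_forall_mem_Icc_hasDerivWithinAt₀
  exact ⟨γ, h0, fun t ht => (hγ t ⟨by linarith [ht.1], by linarith [ht.2]⟩).hasDerivAt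
    (Icc_mem_nhds (by linarith [ht.1]) (by linarith [ht.2]))⟩

lemma exists_lipschitzWith_eqOn {V : Type*} [NormedAddCommGroup V] [NormedSpace ℝ V]
    [FiniteDimensional ℝ V] {v : V → V} {A O : Set V} (hA : IsCompact A) (hO : IsOpen O)
    (hAO : A ⊆ O) (hv : ContDiffOn ℝ 1 v O) :
    ∃ (v' : V → V) (K : NNReal) (M : ℝ), LipschitzWith K v' ∧ (∀ x, ‖v' x‖ ≤ M) ∧ EqOn v' v A ∧
      ∀ x, ∃ c ∈ Icc (0 : ℝ) 1, (x ∉ O → c = 0) ∧ v' x = c • v x := by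
  obtain ⟨L, hL, hAL, hLO⟩ := exists_compact_between hA hO hAO
  obtain ⟨c, hc_zero, hc_one, hc_mem⟩ := exists_contMDiffMap_zero_one_of_isClosed
    (n := 1) (modelWithCornersSelf ℝ V) isOpen_interior.isClosed_compl hA.isClosed
    (disjoint_left.2 fun x hx hxA => hx (hAL hxA))
  have hc_diff : ContDiff ℝ 1 c := c.contMDiff.contDiff
  have hc_notMem : ∀ x ∉ L, c x = 0 := fun x hx => hc_zero fun h => hx (interior_subset h)
  have hdiff : ContDiff ℝ 1 fun x => c x • v x := by
    refine contDiff_iff_contDiffAt.2 fun x => ?_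
    by_cases hx : x ∈ L
    · exact hc_diff.contDiffAt.smul (hv.contDiffAt (hO.mem_nhds (hLO hx)))
    · refine (contDiffAt_const (c := (0 : V))).congr_of_eventuallyEq ?_
      filter_upwards [hL.isClosed.isOpen_compl.mem_nhds hx] with y hy
      rw [hc_notMem y hy, zero_smul]
  have hsupp : HasCompactSupport fun x => c x • v x :=
    .intro hL fun x hx => by rw [hc_notMem x hx, zero_smul]
  obtain ⟨K, hK⟩ := ContDiff.lipschitzWith_of_hasCompactSupport hsupp hdiff one_ne_zero
  obtain ⟨M, hM⟩ := hsupp.exists_bound_of_continuous hdiff.continuous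
  exact ⟨fun x => c x • v x, K, M, hK, hM,
    fun x hx => by simp only [hc_one hx, Pi.one_apply, one_smul],
    fun x => ⟨c x, hc_mem x, fun hx => hc_notMem x fun h => hx (hLO h), rfl⟩⟩

lemma exists_pos_forall_norm_lt_imp {X F : Type*} [TopologicalSpace X] [NormedAddCommGroup F]
    {f : X → F} {K : Set X} {P : X → Prop} (hK : IsCompact K) (hf : ContinuousOn f K)
    (hP : ∀ p ∈ K, f p = 0 → ∀ᶠ x in 𝓝[K] p, P x) :
    ∃ m > 0, ∀ x ∈ K, ‖f x‖ < m → P x := by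
  refine hK.induction_on (p := fun S => ∃ m > 0, ∀ x ∈ S, ‖f x‖ < m → P x) ⟨1, one_pos, by simp⟩
    (fun S T hST ⟨m, hm, hT⟩ => ⟨m, hm, fun x hx => hT x (hST hx)⟩) ?_ fun p hp => ?_
  · rintro S T ⟨m, hm, hS⟩ ⟨m', hm', hT⟩
    refine ⟨min m m', lt_min hm hm', ?_⟩
    rintro x (hx | hx) hlt
    · exact hS x hx (hlt.trans_le (min_le_left _ _))
    · exact hT x hx (hlt.trans_le (min_le_right _ _))
  · by_cases h0 : f p = 0
    · exact ⟨{x | P x}, hP p hp h0, 1, one_pos, fun x hx _ => hx⟩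
    · have hpos : 0 < ‖f p‖ := norm_pos_iff.2 h0
      exact ⟨{x | ‖f p‖ / 2 < ‖f x‖}, (hf p hp).norm.eventually (lt_mem_nhds (half_lt_self hpos)),
        ‖f p‖ / 2, half_pos hpos, fun x hx hlt => absurd hlt (not_lt.2 (le_of_lt hx))⟩

end Trajectories

/-! ### Vector fields turning the argument of a function -/

section TurningField

attribute [local instance] InnerProductSpace.complexToReal

/-- The part of the open ball of radius `R` where `f` does not vanish. -/
def nonvanishingBall {E : Type*} [NormedAddCommGroup E] (f : E → ℂ) (R : ℝ) : Set E :=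
  {x ∈ ball 0 R | f x ≠ 0}

lemma isOpen_nonvanishingBall {E : Type*} [NormedAddCommGroup E] {f : E → ℂ} {R : ℝ}
    (hf : ContinuousOn f (ball 0 R)) : IsOpen (nonvanishingBall f R) :=
  hf.isOpen_inter_preimage isOpen_ball isOpen_compl_singleton

variable {E : Type*} [NormedAddCommGroup E] [InnerProductSpace ℂ E] {f : E → ℂ} {R C s ε m : ℝ}
  {v : E → E} {γ : ℝ → E}

/-- A vector field `v` on the ball of radius `R` outside the zeros of `f` whose trajectories lie on
spheres around the origin, turn the argument of `f` with speed `s` and change `log ‖f‖` with speed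
at most `C`, and which tends to `0` at the zeros of `f`. -/
structure IsTurningField (f : E → ℂ) (R C s : ℝ) (v : E → E) : Prop where
  contDiffOn : ContDiffOn ℝ 1 v (nonvanishingBall f R)
  inner_eq_zero : ∀ x ∈ nonvanishingBall f R, inner ℝ x (v x) = 0
  norm_fderiv_apply_le : ∀ x ∈ nonvanishingBall f R, ‖fderiv ℂ f x (v x)‖ ≤ C * ‖f x‖
  im_fderiv_apply_div : ∀ x ∈ nonvanishingBall f R, (fderiv ℂ f x (v x) / f x).im = s
  tendsto_zero : ∀ p ∈ ball 0 R, f p = 0 → Tendsto v (𝓝[{x | f x ≠ 0}] p) (𝓝 0)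

/-- A differentiable curve `γ` on `[0, 1]` following the field `v` at a time-dependent speed between
`0` and `1`, the speed being `0` where `v` is not controlled. -/
def IsSlowTrajectory (f : E → ℂ) (R : ℝ) (v : E → E) (γ : ℝ → E) : Prop :=
  ∀ t ∈ Icc (0 : ℝ) 1, ∃ c ∈ Icc (0 : ℝ) 1,
    (γ t ∉ nonvanishingBall f R → c = 0) ∧ HasDerivAt γ (c • v (γ t)) t

/-- A trajectory of `v` on the time interval `[0, 1]` avoiding the zeros of `f`. -/
def IsTrajectory (f : E → ℂ) (R : ℝ) (v : E → E) (γ : ℝ → E) : Prop :=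
  ∀ t ∈ Icc (0 : ℝ) 1, HasDerivAt γ (v (γ t)) t ∧ γ t ∈ nonvanishingBall f R

lemma IsTrajectory.isSlowTrajectory (hγ : IsTrajectory f R v γ) : IsSlowTrajectory f R v γ :=
  fun t ht => ⟨1, ⟨zero_le_one, le_rfl⟩, fun h => absurd (hγ t ht).2 h,
    by simpa only [one_smul] using (hγ t ht).1⟩

lemma IsTrajectory.apply_zero_mem (hγ : IsTrajectory f R v γ) : γ 0 ∈ nonvanishingBall f R :=
  (hγ 0 unitInterval.zero_mem).2

lemma IsTrajectory.reverse (hγ : IsTrajectory f R v γ) :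
    IsTrajectory f R (fun x => -v x) fun t => γ (1 - t) := fun t ht =>
  have h := hγ (1 - t) ⟨by linarith [ht.2], by linarith [ht.1]⟩
  ⟨h.1.comp_const_sub 1 t, h.2⟩

lemma IsTurningField.const_smul (hv : IsTurningField f R C s v) (c : ℝ) :
    IsTurningField f R (|c| * C) (c * s) fun x => c • v x where
  contDiffOn := hv.contDiffOn.const_smul c
  inner_eq_zero x hx := by rw [real_inner_smul_right, hv.inner_eq_zero x hx, mul_zero]
  norm_fderiv_apply_le x hx := by
    rw [← Complex.coe_smul, map_smul, norm_smul, Complex.norm_real, Real.norm_eq_abs, mul_assoc]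
    exact mul_le_mul_of_nonneg_left (hv.norm_fderiv_apply_le x hx) (abs_nonneg c)
  im_fderiv_apply_div x hx := by
    rw [← Complex.coe_smul, map_smul, smul_eq_mul, mul_div_assoc, Complex.im_ofReal_mul,
      hv.im_fderiv_apply_div x hx]
  tendsto_zero p hp hfp := by simpa using (hv.tendsto_zero p hp hfp).const_smul c

lemma IsTurningField.neg (hv : IsTurningField f R C s v) :
    IsTurningField f R C (-s) fun x => -v x := by
  simpa using hv.const_smul (-1)

lemma IsTurningField.nonneg (hv : IsTurningField f R C s v) {x : E}
    (hx : x ∈ nonvanishingBall f R) : 0 ≤ C :=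
  nonneg_of_mul_nonneg_left ((norm_nonneg _).trans (hv.norm_fderiv_apply_le x hx))
    (norm_pos_iff.2 hx.2)

lemma IsSlowTrajectory.norm_eq (hγ : IsSlowTrajectory f R v γ) (hv : IsTurningField f R C s v)
    {t : ℝ} (ht : t ∈ Icc (0 : ℝ) 1) : ‖γ t‖ = ‖γ 0‖ := by
  have hderiv : ∀ t ∈ Icc (0 : ℝ) 1, HasDerivAt (fun t => ‖γ t‖ ^ 2) 0 t := fun t ht => by
    obtain ⟨c, -, hc_zero, hγt⟩ := hγ t ht
    refine hγt.norm_sq.congr_deriv ?_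
    rw [real_inner_smul_right, mul_eq_zero, mul_eq_zero]
    by_cases hx : γ t ∈ nonvanishingBall f R
    · exact .inr (.inr (hv.inner_eq_zero _ hx))
    · exact .inr (.inl (hc_zero hx))
  have hconst := constant_of_has_deriv_right_zero (HasDerivAt.continuousOn hderiv)
    (fun t ht => (hderiv t (Ico_subset_Icc_self ht)).hasDerivWithinAt) t ht
  exact (pow_left_inj₀ (norm_nonneg _) (norm_nonneg _) two_ne_zero).1 hconst

lemma hasDerivAt_comp_curve {γ' : E} {t : ℝ} (hf : DifferentiableAt ℂ f (γ t))
    (hγ : HasDerivAt γ γ' t) : HasDerivAt (fun t => f (γ t)) (fderiv ℂ f (γ t) γ') t :=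
  (hf.hasFDerivAt.restrictScalars ℝ).comp_hasDerivAt t hγ

lemma IsSlowTrajectory.exists_hasDerivAt_comp (hγ : IsSlowTrajectory f R v γ)
    (hv : IsTurningField f R C s v) (hf : DifferentiableOn ℂ f (ball 0 R))
    (h0 : γ 0 ∈ nonvanishingBall f R) :
    ∃ F' : ℝ → ℂ, ∀ t ∈ Icc (0 : ℝ) 1,
      HasDerivAt (fun t => f (γ t)) (F' t) t ∧ ‖F' t‖ ≤ C * ‖f (γ t)‖ := by
  have hnorm : ∀ t ∈ Icc (0 : ℝ) 1, ‖γ t‖ = ‖γ 0‖ := fun t ht => hγ.norm_eq hv ht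
  choose! c hc hc_zero hderiv using hγ
  refine ⟨fun t => fderiv ℂ f (γ t) (c t • v (γ t)), fun t ht => ?_⟩
  have hball : γ t ∈ ball (0 : E) R := by
    rw [mem_ball_zero_iff, hnorm t ht]
    exact mem_ball_zero_iff.1 h0.1
  refine ⟨hasDerivAt_comp_curve (hf.differentiableAt (isOpen_ball.mem_nhds hball)) (hderiv t ht),
    show ‖fderiv ℂ f (γ t) (c t • v (γ t))‖ ≤ _ from ?_⟩
  by_cases hx : γ t ∈ nonvanishingBall f R
  · rw [← Complex.coe_smul, map_smul, norm_smul, Complex.norm_real,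
      Real.norm_of_nonneg (hc t ht).1]
    exact (mul_le_of_le_one_left (norm_nonneg _) (hc t ht).2).trans (hv.norm_fderiv_apply_le _ hx)
  · rw [hc_zero t ht hx, zero_smul, map_zero, norm_zero]
    exact mul_nonneg (hv.nonneg h0) (norm_nonneg _)

lemma IsSlowTrajectory.norm_apply_le (hγ : IsSlowTrajectory f R v γ)
    (hv : IsTurningField f R C s v) (hf : DifferentiableOn ℂ f (ball 0 R))
    (h0 : γ 0 ∈ nonvanishingBall f R) {t : ℝ} (ht : t ∈ Icc (0 : ℝ) 1) :
    ‖f (γ t)‖ ≤ ‖f (γ 0)‖ * Real.exp C := by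
  obtain ⟨F', hF'⟩ := hγ.exists_hasDerivAt_comp hv hf h0
  have hsub : Icc 0 t ⊆ Icc (0 : ℝ) 1 := Icc_subset_Icc_right ht.2
  refine (norm_le_norm_mul_exp ht.1 (fun t ht => (hF' t (hsub ht)).1)
    fun t ht => (hF' t (hsub ht)).2).trans ?_
  gcongr
  nlinarith [hv.nonneg h0, ht.2]

lemma IsSlowTrajectory.norm_apply_zero_mul_exp_neg_le (hγ : IsSlowTrajectory f R v γ)
    (hv : IsTurningField f R C s v) (hf : DifferentiableOn ℂ f (ball 0 R))
    (h0 : γ 0 ∈ nonvanishingBall f R) {t : ℝ} (ht : t ∈ Icc (0 : ℝ) 1) :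
    ‖f (γ 0)‖ * Real.exp (-C) ≤ ‖f (γ t)‖ := by
  obtain ⟨F', hF'⟩ := hγ.exists_hasDerivAt_comp hv hf h0
  have hsub : Icc 0 t ⊆ Icc (0 : ℝ) 1 := Icc_subset_Icc_right ht.2
  rw [Real.exp_neg, ← div_eq_mul_inv, div_le_iff₀ (Real.exp_pos C)]
  refine (norm_left_le_norm_mul_exp ht.1 (fun t ht => (hF' t (hsub ht)).1)
    fun t ht => (hF' t (hsub ht)).2).trans ?_
  gcongr
  nlinarith [hv.nonneg h0, ht.2]

lemma IsTrajectory.exists_apply_one_eq (hγ : IsTrajectory f R v γ)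
    (hv : IsTurningField f R C s v) (hf : DifferentiableOn ℂ f (ball 0 R)) :
    ∃ r : ℝ, f (γ 1) = r * f (γ 0) * Complex.exp (s * Complex.I) := by
  set e : ℝ → ℂ := fun t => Complex.exp (-(t * (s * Complex.I)))
  have he : ∀ t, HasDerivAt e (-(s * Complex.I) * e t) t := fun t =>
    (((Complex.ofRealCLM.hasDerivAt (x := t)).mul_const (s * Complex.I)).neg.cexp).congr_deriv
      (by simp [e, mul_comm])
  set ρ : ℝ → ℝ := fun t => (fderiv ℂ f (γ t) (v (γ t)) / f (γ t)).re
  have hderiv : ∀ t ∈ Icc (0 : ℝ) 1,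
      HasDerivAt (fun t => f (γ t) * e t) (ρ t * (f (γ t) * e t)) t := fun t ht => by
    obtain ⟨hγt, hx⟩ := hγ t ht
    have hfγ := hasDerivAt_comp_curve (hf.differentiableAt (isOpen_ball.mem_nhds hx.1)) hγt
    refine (hfγ.mul (he t)).congr_deriv ?_
    have hlog := Complex.re_add_im (fderiv ℂ f (γ t) (v (γ t)) / f (γ t))
    rw [hv.im_fderiv_apply_div _ hx, eq_div_iff hx.2] at hlog
    linear_combination -e t * hlog
  have hρ : ∀ t ∈ Icc (0 : ℝ) 1, |ρ t| ≤ C := fun t ht => by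
    have hx := (hγ t ht).2
    refine (Complex.abs_re_le_norm _).trans ?_
    rw [norm_div, div_le_iff₀ (norm_pos_iff.2 hx.2)]
    exact hv.norm_fderiv_apply_le _ hx
  have h0 : f (γ 0) * e 0 ≠ 0 := mul_ne_zero hγ.apply_zero_mem.2 (Complex.exp_ne_zero _)
  obtain ⟨r, hr⟩ := exists_real_mul_of_hasDerivAt zero_le_one hderiv hρ h0
  refine ⟨r, ?_⟩
  simp only [e, Complex.ofReal_zero, Complex.ofReal_one, one_mul, zero_mul, neg_zero,
    Complex.exp_zero, mul_one] at hr
  rw [← hr, mul_assoc, ← Complex.exp_add, neg_add_cancel, Complex.exp_zero, mul_one]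

/-! ### The time-one map -/

open Classical in
/-- The map following the trajectories of `v` for unit time, extended by the identity to the points
from which no trajectory starts, such as the zeros of `f`. -/
noncomputable def timeOneMap (f : E → ℂ) (R : ℝ) (v : E → E) (x : E) : E :=
  if h : ∃ γ, IsTrajectory f R v γ ∧ γ 0 = x then h.choose 1 else x

lemma timeOneMap_of_eq_zero {x : E} (hx : f x = 0) : timeOneMap f R v x = x :=
  dif_neg fun ⟨_, hγ, h0⟩ => hγ.apply_zero_mem.2 (h0 ▸ hx)

variable [FiniteDimensional ℂ E]

lemma isCompact_closedBall_inter_le_norm (hf : ContinuousOn f (ball 0 R)) (hε : ε < R) :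
    IsCompact {x ∈ closedBall 0 ε | m ≤ ‖f x‖} := by
  have : ProperSpace E := FiniteDimensional.proper ℂ E
  exact (isCompact_closedBall 0 ε).of_isClosed_subset
    ((hf.mono (closedBall_subset_ball hε)).norm.preimage_isClosed_of_isClosed isClosed_closedBall
      isClosed_Ici) (sep_subset _ _)

lemma IsTurningField.exists_lipschitzWith_eqOn (hv : IsTurningField f R C s v)
    (hf : ContinuousOn f (ball 0 R)) (hε : ε < R) (hm : 0 < m) :
    ∃ (v' : E → E) (K : NNReal) (M : ℝ), LipschitzWith K v' ∧ (∀ x, ‖v' x‖ ≤ M) ∧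
      EqOn v' v {x ∈ closedBall 0 ε | m ≤ ‖f x‖} ∧
      ∀ x, ∃ c ∈ Icc (0 : ℝ) 1, (x ∉ nonvanishingBall f R → c = 0) ∧ v' x = c • v x :=
  _root_.exists_lipschitzWith_eqOn (isCompact_closedBall_inter_le_norm hf hε)
    (isOpen_nonvanishingBall hf) (fun _ hx => ⟨closedBall_subset_ball hε hx.1,
      norm_pos_iff.1 (hm.trans_le hx.2)⟩) hv.contDiffOn

/-- The lower bound on `‖f‖` along slow trajectories keeps a trajectory of a cut-off field in the
region where the field was not changed. -/
lemma IsTurningField.exists_isTrajectory (hv : IsTurningField f R C s v)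
    (hf : DifferentiableOn ℂ f (ball 0 R)) {x : E} (hx : x ∈ nonvanishingBall f R) :
    ∃ γ, IsTrajectory f R v γ ∧ γ 0 = x := by
  have := FiniteDimensional.complete ℂ E
  have hm : 0 < ‖f x‖ * Real.exp (-C) := mul_pos (norm_pos_iff.2 hx.2) (Real.exp_pos _)
  obtain ⟨v', K, M, hK, hM, hv', hslow⟩ :=
    hv.exists_lipschitzWith_eqOn hf.continuousOn (mem_ball_zero_iff.1 hx.1) hm
  obtain ⟨γ, rfl, hγ⟩ := exists_forall_hasDerivAt_of_lipschitzWith hK hM x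
  have hγ_slow : IsSlowTrajectory f R v γ := fun t ht => by
    obtain ⟨c, hc, hc_zero, hc_eq⟩ := hslow (γ t)
    exact ⟨c, hc, hc_zero, hc_eq ▸ hγ t ht⟩
  refine ⟨γ, fun t ht => ?_, rfl⟩
  have hnorm := hγ_slow.norm_eq hv ht
  have hle := hγ_slow.norm_apply_zero_mul_exp_neg_le hv hf hx ht
  refine ⟨hv' ⟨mem_closedBall_zero_iff.2 hnorm.le, hle⟩ ▸ hγ t ht, ?_,
    norm_pos_iff.1 (hm.trans_le hle)⟩
  rw [mem_ball_zero_iff, hnorm]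
  exact mem_ball_zero_iff.1 hx.1

lemma IsTurningField.exists_dist_apply_one_le (hv : IsTurningField f R C s v)
    (hf : DifferentiableOn ℂ f (ball 0 R)) (hε : ε < R) (hm : 0 < m) :
    ∃ L : NNReal, ∀ γ₁ γ₂, IsTrajectory f R v γ₁ → IsTrajectory f R v γ₂ →
      γ₁ 0 ∈ {x ∈ closedBall 0 ε | m ≤ ‖f x‖} → γ₂ 0 ∈ {x ∈ closedBall 0 ε | m ≤ ‖f x‖} →
      dist (γ₁ 1) (γ₂ 1) ≤ L * dist (γ₁ 0) (γ₂ 0) := by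
  obtain ⟨v', K, -, hK, -, hv', -⟩ :=
    hv.exists_lipschitzWith_eqOn hf.continuousOn hε (mul_pos hm (Real.exp_pos (-C)))
  have hderiv {γ} (hγ : IsTrajectory f R v γ) (h0 : γ 0 ∈ {x ∈ closedBall 0 ε | m ≤ ‖f x‖}) :
      ∀ t ∈ Icc (0 : ℝ) 1, HasDerivAt γ (v' (γ t)) t := fun t ht => by
    have hle := hγ.isSlowTrajectory.norm_apply_zero_mul_exp_neg_le hv hf hγ.apply_zero_mem ht
    have hmem : γ t ∈ closedBall 0 ε := by
      rw [mem_closedBall_zero_iff, hγ.isSlowTrajectory.norm_eq hv ht]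
      exact mem_closedBall_zero_iff.1 h0.1
    exact hv' ⟨hmem, hle.trans' (by gcongr; exact h0.2)⟩ ▸ (hγ t ht).1
  refine ⟨⟨Real.exp (K * (1 - 0)), (Real.exp_pos _).le⟩, fun γ₁ γ₂ hγ₁ hγ₂ h₁ h₂ => ?_⟩
  rw [mul_comm]
  have hγ₁' := hderiv hγ₁ h₁
  have hγ₂' := hderiv hγ₂ h₂
  exact dist_le_of_trajectories_ODE (v := fun _ => v') (fun _ => hK) (HasDerivAt.continuousOn hγ₁')
    (fun t ht => (hγ₁' t (Ico_subset_Icc_self ht)).hasDerivWithinAt) (HasDerivAt.continuousOn hγ₂')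
    (fun t ht => (hγ₂' t (Ico_subset_Icc_self ht)).hasDerivWithinAt) le_rfl 1
    unitInterval.one_mem

lemma IsTurningField.apply_one_eq (hv : IsTurningField f R C s v)
    (hf : DifferentiableOn ℂ f (ball 0 R)) {γ₁ γ₂ : ℝ → E} (hγ₁ : IsTrajectory f R v γ₁)
    (hγ₂ : IsTrajectory f R v γ₂) (h : γ₁ 0 = γ₂ 0) : γ₁ 1 = γ₂ 1 := by
  have h₂ := hγ₂.apply_zero_mem
  obtain ⟨L, hL⟩ := hv.exists_dist_apply_one_le hf (mem_ball_zero_iff.1 h₂.1)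
    (norm_pos_iff.2 h₂.2)
  have hmem : γ₂ 0 ∈ {x ∈ closedBall 0 ‖γ₂ 0‖ | ‖f (γ₂ 0)‖ ≤ ‖f x‖} :=
    ⟨mem_closedBall_zero_iff.2 le_rfl, le_rfl⟩
  have hle := hL γ₁ γ₂ hγ₁ hγ₂ (h ▸ hmem) hmem
  rwa [h, dist_self, mul_zero, dist_le_zero] at hle

lemma IsTurningField.exists_norm_lt_imp_norm_le (hv : IsTurningField f R C s v)
    (hf : ContinuousOn f (ball 0 R)) (hε : ε < R) {η : ℝ} (hη : 0 < η) :
    ∃ m > 0, ∀ x ∈ closedBall 0 ε, ‖f x‖ < m → f x ≠ 0 → ‖v x‖ ≤ η := by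
  have : ProperSpace E := FiniteDimensional.proper ℂ E
  have hsub := closedBall_subset_ball (x := (0 : E)) hε
  refine exists_pos_forall_norm_lt_imp (isCompact_closedBall 0 ε) (hf.mono hsub)
    fun p hp hfp => nhdsWithin_le_nhds ?_
  have hlim := (hv.tendsto_zero p (hsub hp) hfp).norm
  rw [norm_zero] at hlim
  exact (eventually_nhdsWithin_iff.1 (hlim.eventually (gt_mem_nhds hη))).mono
    fun x hx hfx => (hx hfx).le

lemma IsTurningField.exists_norm_lt_imp_dist_le (hv : IsTurningField f R C s v)
    (hf : DifferentiableOn ℂ f (ball 0 R)) (hε : ε < R) {η : ℝ} (hη : 0 < η) :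
    ∃ m > 0, ∀ γ, IsTrajectory f R v γ → γ 0 ∈ closedBall 0 ε → ‖f (γ 0)‖ < m →
      dist (γ 1) (γ 0) ≤ η := by
  obtain ⟨m, hm, hmv⟩ := hv.exists_norm_lt_imp_norm_le hf.continuousOn hε hη
  refine ⟨m * Real.exp (-C), by positivity, fun γ hγ h0 hlt => ?_⟩
  rw [dist_eq_norm]
  refine norm_image_sub_le_of_norm_deriv_le_segment_01'
    (fun t ht => (hγ t ht).1.hasDerivWithinAt) fun t ht => ?_
  replace ht := Ico_subset_Icc_self ht
  refine hmv _ ?_ ?_ (hγ t ht).2.2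
  · rw [mem_closedBall_zero_iff, hγ.isSlowTrajectory.norm_eq hv ht]
    exact mem_closedBall_zero_iff.1 h0
  · calc ‖f (γ t)‖ ≤ ‖f (γ 0)‖ * Real.exp C :=
          hγ.isSlowTrajectory.norm_apply_le hv hf hγ.apply_zero_mem ht
      _ < m * Real.exp (-C) * Real.exp C := by gcongr
      _ = m := by rw [mul_assoc, ← Real.exp_add, neg_add_cancel, Real.exp_zero, mul_one]

namespace IsTurningField

lemma exists_isTrajectory_timeOneMap (hv : IsTurningField f R C s v)
    (hf : DifferentiableOn ℂ f (ball 0 R)) {x : E} (hx : x ∈ nonvanishingBall f R) :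
    ∃ γ, IsTrajectory f R v γ ∧ γ 0 = x ∧ γ 1 = timeOneMap f R v x :=
  have h := hv.exists_isTrajectory hf hx
  ⟨h.choose, h.choose_spec.1, h.choose_spec.2, by rw [timeOneMap, dif_pos h]⟩

lemma timeOneMap_eq (hv : IsTurningField f R C s v) (hf : DifferentiableOn ℂ f (ball 0 R))
    (hγ : IsTrajectory f R v γ) : timeOneMap f R v (γ 0) = γ 1 := by
  obtain ⟨γ', hγ', h0, h1⟩ := hv.exists_isTrajectory_timeOneMap hf hγ.apply_zero_mem
  rw [← h1, hv.apply_one_eq hf hγ' hγ h0]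

lemma timeOneMap_neg_timeOneMap (hv : IsTurningField f R C s v)
    (hf : DifferentiableOn ℂ f (ball 0 R)) {x : E} (hx : x ∈ ball 0 R) :
    timeOneMap f R (fun x => -v x) (timeOneMap f R v x) = x := by
  by_cases hfx : f x = 0
  · rw [timeOneMap_of_eq_zero hfx, timeOneMap_of_eq_zero hfx]
  · obtain ⟨γ, hγ, rfl, h1⟩ := hv.exists_isTrajectory_timeOneMap hf ⟨hx, hfx⟩
    simpa only [sub_zero, sub_self, h1] using hv.neg.timeOneMap_eq hf hγ.reverse

lemma norm_timeOneMap (hv : IsTurningField f R C s v) (hf : DifferentiableOn ℂ f (ball 0 R))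
    {x : E} (hx : x ∈ ball 0 R) : ‖timeOneMap f R v x‖ = ‖x‖ := by
  by_cases hfx : f x = 0
  · rw [timeOneMap_of_eq_zero hfx]
  · obtain ⟨γ, hγ, rfl, h1⟩ := hv.exists_isTrajectory_timeOneMap hf ⟨hx, hfx⟩
    rw [← h1, hγ.isSlowTrajectory.norm_eq hv unitInterval.one_mem]

lemma exists_apply_timeOneMap_eq (hv : IsTurningField f R C s v)
    (hf : DifferentiableOn ℂ f (ball 0 R)) {x : E} (hx : x ∈ ball 0 R) :
    ∃ r : ℝ, f (timeOneMap f R v x) = r * f x * Complex.exp (s * Complex.I) := by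
  by_cases hfx : f x = 0
  · exact ⟨1, by rw [timeOneMap_of_eq_zero hfx, hfx, mul_zero, zero_mul]⟩
  · obtain ⟨γ, hγ, rfl, h1⟩ := hv.exists_isTrajectory_timeOneMap hf ⟨hx, hfx⟩
    exact h1 ▸ hγ.exists_apply_one_eq hv hf

lemma exists_lipschitzOnWith_timeOneMap (hv : IsTurningField f R C s v)
    (hf : DifferentiableOn ℂ f (ball 0 R)) (hε : ε < R) (hm : 0 < m) :
    ∃ L, LipschitzOnWith L (timeOneMap f R v) {x ∈ closedBall 0 ε | m ≤ ‖f x‖} := by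
  obtain ⟨L, hL⟩ := hv.exists_dist_apply_one_le hf hε hm
  have hmem {x} (hx : x ∈ {x ∈ closedBall 0 ε | m ≤ ‖f x‖}) : x ∈ nonvanishingBall f R :=
    ⟨closedBall_subset_ball hε hx.1, norm_pos_iff.1 (hm.trans_le hx.2)⟩
  refine ⟨L, .of_dist_le_mul fun x hx y hy => ?_⟩
  obtain ⟨γ₁, hγ₁, rfl, h₁⟩ := hv.exists_isTrajectory_timeOneMap hf (hmem hx)
  obtain ⟨γ₂, hγ₂, rfl, h₂⟩ := hv.exists_isTrajectory_timeOneMap hf (hmem hy)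
  exact h₁ ▸ h₂ ▸ hL γ₁ γ₂ hγ₁ hγ₂ hx hy

lemma exists_dist_timeOneMap_le (hv : IsTurningField f R C s v)
    (hf : DifferentiableOn ℂ f (ball 0 R)) (hε : ε < R) {η : ℝ} (hη : 0 < η) :
    ∃ m > 0, ∀ x ∈ closedBall 0 ε, ‖f x‖ < m → dist (timeOneMap f R v x) x ≤ η := by
  obtain ⟨m, hm, hdist⟩ := hv.exists_norm_lt_imp_dist_le hf hε hη
  refine ⟨m, hm, fun x hx hlt => ?_⟩
  by_cases hfx : f x = 0
  · rw [timeOneMap_of_eq_zero hfx, dist_self]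
    exact hη.le
  · obtain ⟨γ, hγ, rfl, h1⟩ :=
      hv.exists_isTrajectory_timeOneMap hf ⟨closedBall_subset_ball hε hx, hfx⟩
    exact h1 ▸ hdist γ hγ hx hlt

lemma continuousOn_timeOneMap (hv : IsTurningField f R C s v)
    (hf : DifferentiableOn ℂ f (ball 0 R)) : ContinuousOn (timeOneMap f R v) (ball 0 R) := by
  refine fun p hp => ContinuousAt.continuousWithinAt ?_
  obtain ⟨ε, hpε, hεR⟩ := exists_between (mem_ball_zero_iff.1 hp)
  have hball : ∀ᶠ x in 𝓝 p, x ∈ closedBall (0 : E) ε :=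
    closedBall_mem_nhds_of_mem (mem_ball_zero_iff.2 hpε)
  have hfp := (hf.continuousOn.continuousAt (isOpen_ball.mem_nhds hp)).norm
  by_cases h0 : f p = 0
  · refine Metric.tendsto_nhds.2 fun η hη => ?_
    obtain ⟨m, hm, hdist⟩ := hv.exists_dist_timeOneMap_le hf hεR (half_pos hη)
    have hlt : ∀ᶠ x in 𝓝 p, ‖f x‖ < m := hfp.eventually_lt_const (by simpa only [h0, norm_zero])
    filter_upwards [hball, hlt, ball_mem_nhds p (half_pos hη)] with x hx hfx hxp
    rw [timeOneMap_of_eq_zero h0]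
    exact (dist_triangle _ x p).trans_lt (by linarith [hdist x hx hfx, mem_ball.1 hxp])
  · have hpos : 0 < ‖f p‖ := norm_pos_iff.2 h0
    obtain ⟨L, hL⟩ := hv.exists_lipschitzOnWith_timeOneMap hf hεR (half_pos hpos)
    exact hL.continuousOn.continuousAt
      (hball.and (hfp.eventually_const_le (half_lt_self hpos)))

lemma nonempty_homeomorph (hv : IsTurningField f R C s v) (hf : DifferentiableOn ℂ f (ball 0 R))
    {A B : Set E} (hA : A ⊆ ball 0 R) (hB : B ⊆ ball 0 R) (hAB : MapsTo (timeOneMap f R v) A B)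
    (hBA : MapsTo (timeOneMap f R fun x => -v x) B A) : Nonempty (A ≃ₜ B) :=
  ⟨{  toFun := hAB.restrict
      invFun := hBA.restrict
      left_inv x := Subtype.ext (hv.timeOneMap_neg_timeOneMap hf (hA x.2))
      right_inv x := Subtype.ext <| by
        have h := hv.neg.timeOneMap_neg_timeOneMap hf (hB x.2)
        simp only [neg_neg] at h
        exact h
      continuous_toFun := ((hv.continuousOn_timeOneMap hf).mono hA).mapsToRestrict hAB
      continuous_invFun := ((hv.neg.continuousOn_timeOneMap hf).mono hB).mapsToRestrict hBA }⟩

end IsTurningField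

end TurningField

/-! ### Construction of a turning field -/

section TangentialPart

variable {F : Type*} [NormedAddCommGroup F] [InnerProductSpace ℝ F] {x y : F}

/-- The component of `y` orthogonal to `x`, that is, tangent to the sphere around the origin through
`x`. For `x = 0` it is `y`. -/
noncomputable def tangentialPart (x y : F) : F := y - (inner ℝ x y / ‖x‖ ^ 2) • x

/-- The multiple of `tangentialPart x y` whose inner product with `y` is `1`. It is `0` if `y` is
proportional to `x`. -/
noncomputable def tangentialDual (x y : F) : F :=
  (‖tangentialPart x y‖ ^ 2)⁻¹ • tangentialPart x y

lemma inner_tangentialPart_left (x y : F) : inner ℝ x (tangentialPart x y) = 0 := by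
  obtain rfl | hx := eq_or_ne x 0
  · exact inner_zero_left _
  · rw [tangentialPart, inner_sub_right, real_inner_smul_right, real_inner_self_eq_norm_sq,
      div_mul_cancel₀ _ (pow_ne_zero 2 (norm_ne_zero_iff.2 hx)), sub_self]

lemma inner_tangentialPart_right (x y : F) :
    inner ℝ y (tangentialPart x y) = ‖tangentialPart x y‖ ^ 2 := by
  rw [← real_inner_self_eq_norm_sq]
  nth_rw 2 [tangentialPart]
  rw [inner_sub_left, real_inner_smul_left, inner_tangentialPart_left, mul_zero, sub_zero]

lemma norm_tangentialPart_sq (x y : F) :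
    ‖tangentialPart x y‖ ^ 2 = ‖y‖ ^ 2 - inner ℝ x y ^ 2 / ‖x‖ ^ 2 := by
  rw [← inner_tangentialPart_right, tangentialPart, inner_sub_right, real_inner_smul_right,
    real_inner_self_eq_norm_sq, real_inner_comm]
  ring

lemma norm_le_two_mul_norm_tangentialPart (h : |inner ℝ x y| ≤ 1 / 2 * (‖x‖ * ‖y‖)) :
    ‖y‖ ≤ 2 * ‖tangentialPart x y‖ := by
  have hle : inner ℝ x y ^ 2 / ‖x‖ ^ 2 ≤ 1 / 4 * ‖y‖ ^ 2 :=
    div_le_of_le_mul₀ (by positivity) (by positivity)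
      ((sq_le_sq' (neg_le_of_abs_le h) (le_of_abs_le h)).trans_eq (by ring))
  refine le_of_sq_le_sq ?_ (by positivity)
  nlinarith [norm_tangentialPart_sq x y, sq_nonneg ‖y‖]

lemma inner_tangentialDual_left (x y : F) : inner ℝ x (tangentialDual x y) = 0 := by
  rw [tangentialDual, real_inner_smul_right, inner_tangentialPart_left, mul_zero]

lemma inner_tangentialDual_right (h : tangentialPart x y ≠ 0) :
    inner ℝ y (tangentialDual x y) = 1 := by
  rw [tangentialDual, real_inner_smul_right, inner_tangentialPart_right,
    inv_mul_cancel₀ (pow_ne_zero 2 (norm_ne_zero_iff.2 h))]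

lemma norm_tangentialDual_mul_norm_le (h : |inner ℝ x y| ≤ 1 / 2 * (‖x‖ * ‖y‖)) :
    ‖tangentialDual x y‖ * ‖y‖ ≤ 2 := by
  have hnorm : ‖tangentialDual x y‖ = ‖tangentialPart x y‖⁻¹ := by
    rw [tangentialDual, norm_smul, norm_inv, norm_pow, norm_norm, sq, mul_inv]
    simpa only [inv_inv] using mul_self_mul_inv ‖tangentialPart x y‖⁻¹
  rw [hnorm, inv_mul_eq_div]
  exact div_le_of_le_mul₀ (norm_nonneg _) zero_le_two (norm_le_two_mul_norm_tangentialPart h)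

lemma contDiffAt_tangentialDual {G : Type*} [NormedAddCommGroup G] [NormedSpace ℝ G] {a b : G → F}
    {p : G} {n : WithTop ℕ∞} (ha : ContDiffAt ℝ n a p) (hb : ContDiffAt ℝ n b p) (h0 : a p ≠ 0)
    (h : tangentialPart (a p) (b p) ≠ 0) :
    ContDiffAt ℝ n (fun x => tangentialDual (a x) (b x)) p := by
  have hT : ContDiffAt ℝ n (fun x => tangentialPart (a x) (b x)) p :=
    hb.sub (((ha.inner ℝ hb).div (ha.norm_sq ℝ) (pow_ne_zero 2 (norm_ne_zero_iff.2 h0))).smul ha)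
  exact ((hT.norm_sq ℝ).inv (pow_ne_zero 2 (norm_ne_zero_iff.2 h))).smul hT

end TangentialPart

section GradArg

attribute [local instance] InnerProductSpace.complexToReal

variable {E : Type*} [NormedAddCommGroup E] [InnerProductSpace ℂ E] [FiniteDimensional ℂ E]
  {f : E → ℂ} {R : ℝ} {x p : E}

/-- The gradient of the argument of `f`, with respect to the real inner product. -/
noncomputable def gradArg (f : E → ℂ) (x : E) : E :=
  have := FiniteDimensional.complete ℂ E
  (InnerProductSpace.toDual ℂ E).symm (-(Complex.I / f x) • fderiv ℂ f x)

lemma inner_gradArg (f : E → ℂ) (x y : E) :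
    inner ℂ (gradArg f x) y = -(Complex.I * (fderiv ℂ f x y / f x)) := by
  have := FiniteDimensional.complete ℂ E
  rw [gradArg, InnerProductSpace.toDual_symm_apply, smul_apply, smul_eq_mul]
  ring

lemma real_inner_gradArg (f : E → ℂ) (x y : E) :
    inner ℝ (gradArg f x) y = (fderiv ℂ f x y / f x).im := by
  rw [real_inner_eq_re_inner ℂ, inner_gradArg]
  simp

lemma norm_gradArg (f : E → ℂ) (x : E) : ‖gradArg f x‖ = ‖fderiv ℂ f x‖ / ‖f x‖ := by
  have := FiniteDimensional.complete ℂ E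
  rw [gradArg, LinearIsometryEquiv.norm_map, norm_smul, norm_neg, norm_div, Complex.norm_I,
    one_div_mul_eq_div]

lemma HolomorphicAt.contDiffAt (hf : HolomorphicAt f x) : ContDiffAt ℝ 1 f x := by
  refine ContDiffAt.restrict_scalars ℝ (contDiffAt_one_iff.2
    ⟨fderiv ℂ f, _, hf.eventually, fun y hy => ?_, fun y hy => hy.differentiableAt.hasFDerivAt⟩)
  exact (continuousAt_clm_apply.2 fun v => (hy.fderiv_apply v).continuousAt).continuousWithinAt

lemma contDiffAt_gradArg (hf : HolomorphicAt f x) (h0 : f x ≠ 0) :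
    ContDiffAt ℝ 1 (gradArg f) x := by
  set e := stdOrthonormalBasis ℂ E
  have hcoord : ∀ y i, inner ℂ (e i) (gradArg f y) =
      (starRingEnd ℂ) (-(Complex.I * (fderiv ℂ f y (e i) / f y))) := fun y i => by
    rw [← inner_gradArg, inner_conj_symm]
  have hsum : gradArg f = fun y => ∑ i, inner ℂ (e i) (gradArg f y) • e i :=
    funext fun y => (e.sum_repr' _).symm
  rw [hsum]
  simp only [hcoord]
  refine ContDiffAt.sum fun i _ => ContDiffAt.smul ?_ contDiffAt_const
  exact Complex.conjCLE.contDiff.contDiffAt.comp x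
    (contDiffAt_const.mul ((hf.fderiv_apply (e i)).contDiffAt.mul (hf.contDiffAt.inv h0))).neg

lemma abs_real_inner_gradArg_le (h0 : f x ≠ 0)
    (h : |(fderiv ℂ f x x * (starRingEnd ℂ) (f x)).im| ≤ 1 / 2 * (‖x‖ * ‖fderiv ℂ f x‖ * ‖f x‖)) :
    |inner ℝ x (gradArg f x)| ≤ 1 / 2 * (‖x‖ * ‖gradArg f x‖) := by
  have him : (fderiv ℂ f x x / f x).im =
      (fderiv ℂ f x x * (starRingEnd ℂ) (f x)).im / ‖f x‖ ^ 2 := by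
    rw [div_eq_mul_inv, Complex.inv_def, ← mul_assoc, Complex.im_mul_ofReal,
      Complex.normSq_eq_norm_sq, div_eq_mul_inv]
  rw [real_inner_comm, real_inner_gradArg, him, abs_div, abs_of_nonneg (sq_nonneg ‖f x‖),
    norm_gradArg]
  refine (div_le_div_of_nonneg_right h (sq_nonneg _)).trans_eq ?_
  field_simp

lemma norm_fderiv_apply_tangentialDual_gradArg_le (h0 : f x ≠ 0)
    (h : |inner ℝ x (gradArg f x)| ≤ 1 / 2 * (‖x‖ * ‖gradArg f x‖)) :
    ‖fderiv ℂ f x (tangentialDual x (gradArg f x))‖ ≤ 2 * ‖f x‖ := by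
  have hle := norm_inner_le_norm (𝕜 := ℂ) (gradArg f x) (tangentialDual x (gradArg f x))
  rw [inner_gradArg, norm_neg, norm_mul, Complex.norm_I, one_mul, norm_div,
    div_le_iff₀ (norm_pos_iff.2 h0), mul_comm ‖gradArg f x‖] at hle
  exact hle.trans (mul_le_mul_of_nonneg_right (norm_tangentialDual_mul_norm_le h) (norm_nonneg _))

lemma norm_tangentialDual_gradArg_le (h0 : f x ≠ 0) (hf' : fderiv ℂ f x ≠ 0)
    (h : |inner ℝ x (gradArg f x)| ≤ 1 / 2 * (‖x‖ * ‖gradArg f x‖)) :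
    ‖tangentialDual x (gradArg f x)‖ ≤ 2 * (‖f x‖ / ‖fderiv ℂ f x‖) := by
  have hle := norm_tangentialDual_mul_norm_le h
  rw [norm_gradArg, ← mul_div_assoc, div_le_iff₀ (norm_pos_iff.2 h0)] at hle
  rwa [← mul_div_assoc, le_div_iff₀ (norm_pos_iff.2 hf')]

lemma tangentialPart_gradArg_ne_zero (h0 : f x ≠ 0) (hf' : fderiv ℂ f x ≠ 0)
    (h : |inner ℝ x (gradArg f x)| ≤ 1 / 2 * (‖x‖ * ‖gradArg f x‖)) :
    tangentialPart x (gradArg f x) ≠ 0 := by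
  have hpos : 0 < ‖gradArg f x‖ := by
    rw [norm_gradArg]
    exact div_pos (norm_pos_iff.2 hf') (norm_pos_iff.2 h0)
  exact norm_pos_iff.1 (by linarith [norm_le_two_mul_norm_tangentialPart h])

lemma isTurningField_tangentialDual_gradArg (hf : DifferentiableOn ℂ f (ball 0 R))
    (hx : ∀ x ∈ nonvanishingBall f R, x ≠ 0) (hf' : ∀ x ∈ nonvanishingBall f R, fderiv ℂ f x ≠ 0)
    (h : ∀ x ∈ nonvanishingBall f R,
      |inner ℝ x (gradArg f x)| ≤ 1 / 2 * (‖x‖ * ‖gradArg f x‖)) :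
    IsTurningField f R 2 1 fun x => tangentialDual x (gradArg f x) :=
  have hH (x) (hx : x ∈ ball (0 : E) R) : HolomorphicAt f x :=
    hf.eventually_differentiableAt (isOpen_ball.mem_nhds hx)
  have hT (x) (hx : x ∈ nonvanishingBall f R) : tangentialPart x (gradArg f x) ≠ 0 :=
    tangentialPart_gradArg_ne_zero hx.2 (hf' x hx) (h x hx)
  { contDiffOn := fun y hy => (contDiffAt_tangentialDual contDiffAt_id
      (contDiffAt_gradArg (hH y hy.1) hy.2) (hx y hy) (hT y hy)).contDiffWithinAt
    inner_eq_zero := fun x _ => inner_tangentialDual_left _ _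
    norm_fderiv_apply_le := fun x hx =>
      norm_fderiv_apply_tangentialDual_gradArg_le hx.2 (h x hx)
    im_fderiv_apply_div := fun x hx => by
      rw [← real_inner_gradArg, inner_tangentialDual_right (hT x hx)]
    tendsto_zero := fun p hp hfp => by
      have hlim := ((hH p hp).isLittleO_fderiv hfp).norm_norm.tendsto_div_nhds_zero.const_mul 2
      rw [mul_zero] at hlim
      refine squeeze_zero_norm' ?_ (hlim.mono_left nhdsWithin_le_nhds)
      filter_upwards [self_mem_nhdsWithin, nhdsWithin_le_nhds (isOpen_ball.mem_nhds hp)] with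
        x hfx hx
      exact norm_tangentialDual_gradArg_le hfx (hf' x ⟨hx, hfx⟩) (h x ⟨hx, hfx⟩) }

lemma exists_isTurningField (hf : HolomorphicAt f 0) (hf0 : f 0 = 0) {N : Set E} (hN : N ∈ 𝓝 0) :
    ∃ R > 0, ball 0 R ⊆ N ∧ DifferentiableOn ℂ f (ball 0 R) ∧ ∃ v, IsTurningField f R 2 1 v := by
  obtain ⟨R, hR, hball⟩ := Metric.eventually_nhds_iff_ball.1 <| hf.and <|
    ((hf.isLittleO_fderiv hf0).bound one_pos).and <|
    ((hf.isLittleO_im_fderiv_apply_sub hf0).bound one_half_pos).and hN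
  have hfR : DifferentiableOn ℂ f (ball 0 R) := fun x hx => (hball x hx).1.differentiableWithinAt
  refine ⟨R, hR, fun x hx => (hball x hx).2.2.2, hfR, _,
    isTurningField_tangentialDual_gradArg hfR (fun x hx h0 => hx.2 (h0 ▸ hf0))
      (fun x hx => ?_) fun x hx => abs_real_inner_gradArg_le hx.2 ?_⟩
  · have hle := (hball x hx.1).2.1
    rw [one_mul] at hle
    exact norm_pos_iff.1 ((norm_pos_iff.2 hx.2).trans_le hle)
  · simpa only [sub_zero, Real.norm_eq_abs, abs_mul, abs_norm] using (hball x hx.1).2.2.1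

end GradArg

/-! ### The pencil -/

lemma IsTurningField.mapsTo_timeOneMap_Xset {E : Type} [NormedAddCommGroup E]
    [InnerProductSpace ℂ E] [FiniteDimensional ℂ E] {f : E → ℂ} {R C s ε : ℝ} {v : E → E}
    {U : Set E} (hv : IsTurningField f R C s v) (hf : DifferentiableOn ℂ f (ball 0 R)) (hε : ε < R)
    (hU : closedBall 0 ε ⊆ U) (θ : ℝ) :
    MapsTo (timeOneMap f R v) (Xset U f θ ∩ closedBall 0 ε)
      (Xset U f (θ + s) ∩ closedBall 0 ε) := by
  rintro x ⟨⟨-, t, ht⟩, hx⟩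
  have hxR := closedBall_subset_ball hε hx
  have hmem : timeOneMap f R v x ∈ closedBall 0 ε := by
    rw [mem_closedBall_zero_iff, hv.norm_timeOneMap hf hxR]
    exact mem_closedBall_zero_iff.1 hx
  obtain ⟨r, hr⟩ := hv.exists_apply_timeOneMap_eq hf hxR
  refine ⟨⟨hU hmem, r * t, ?_⟩, hmem⟩
  rw [hr, ht]
  push_cast
  rw [add_mul, Complex.exp_add]
  ring

theorem stmt_8_general {E : Type} [NormedAddCommGroup E] [InnerProductSpace ℂ E]
    [FiniteDimensional ℂ E] {U : Set E} (hU : U ∈ 𝓝 0) {f : E → ℂ} (hf : HolomorphicAt f 0)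
    (hf0 : f 0 = 0) :
    ∃ ε₀ > (0 : ℝ), closedBall 0 ε₀ ⊆ U ∧ ∀ ε ≤ ε₀, ∀ θ₁ θ₂ : ℝ,
      Nonempty (↥(Xset U f θ₁ ∩ closedBall 0 ε) ≃ₜ ↥(Xset U f θ₂ ∩ closedBall 0 ε)) := by
  obtain ⟨R, hR, hRU, hfR, v, hv⟩ := exists_isTurningField hf hf0 hU
  refine ⟨R / 2, half_pos hR, (closedBall_subset_ball (half_lt_self hR)).trans hRU,
    fun ε hε θ₁ θ₂ => ?_⟩
  have hεR : ε < R := hε.trans_lt (half_lt_self hR)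
  have hεU : closedBall 0 ε ⊆ U := (closedBall_subset_ball hεR).trans hRU
  have hsub (θ : ℝ) : Xset U f θ ∩ closedBall 0 ε ⊆ ball 0 R :=
    inter_subset_right.trans (closedBall_subset_ball hεR)
  have hw := hv.const_smul (θ₂ - θ₁)
  rw [mul_one] at hw
  have hfwd := hw.mapsTo_timeOneMap_Xset hfR hεR hεU θ₁
  have hbwd := hw.neg.mapsTo_timeOneMap_Xset hfR hεR hεU θ₂
  rw [add_sub_cancel] at hfwd
  rw [neg_sub, add_sub_cancel] at hbwd
  exact hw.nonempty_homeomorph hfR (hsub θ₁) (hsub θ₂) hfwd hbwd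

theorem stmt_8 (n : ℕ) (hn : 1 ≤ n)
    (U : Set (EuclideanSpace ℂ (Fin n))) (hU : IsOpen U)
    (h0U : (0 : EuclideanSpace ℂ (Fin n)) ∈ U)
    (f : EuclideanSpace ℂ (Fin n) → ℂ) (hf : DifferentiableOn ℂ f U) (hf0 : f 0 = 0)
    (hfnz : ∀ W ∈ nhds (0 : EuclideanSpace ℂ (Fin n)), ∃ x ∈ W ∩ U, f x ≠ 0) :
    ∃ ε₀ > (0 : ℝ), Metric.closedBall (0 : EuclideanSpace ℂ (Fin n)) ε₀ ⊆ U ∧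
      ∀ ε : ℝ, 0 < ε → ε ≤ ε₀ → ∀ θ₁ θ₂ : ℝ,
        Nonempty
          (((Xset U f θ₁ ∩ Metric.closedBall (0 : EuclideanSpace ℂ (Fin n)) ε) : Set _) ≃ₜ
           ((Xset U f θ₂ ∩ Metric.closedBall (0 : EuclideanSpace ℂ (Fin n)) ε) : Set _)) := by
  have hU0 := hU.mem_nhds h0U
  obtain ⟨ε₀, hε₀, hsub, h⟩ := stmt_8_general hU0 (hf.eventually_differentiableAt hU0) hf0
  exact ⟨ε₀, hε₀, hsub, fun ε _ hε => h ε hε⟩
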